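/- Under the correctly specified model, with the specific tuning choices λ_n = c₁ σ [r_n² + r_n √(log(ep)/n)] and μ_n = c₂ σ² [r_n² + log(ep)/n] + c₂ λ_n Ω_gr(f°) (where c₁, c₂ are the constants from the corollary), there is a constant C depending only on σ, Ω_gr(f°) and K such that, with probability at least 1 − 1/p, the prediction error satisfies ‖f̂ − f*‖²_n ≤ C [ n^{−2/3} + log(ep)/n ]. -/

import Mathlib

open MeasureTheory ProbabilityTheory

noncomputable section

namespace Census

structure AddRep (p : ℕ) where
  main : Fin p → ℝ → ℝ
  inter : Fin p → Fin p → ℝ → ℝ → ℝ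
  smooth_main : ∀ j, ContDiff ℝ 2 (main j)
  smooth_inter : ∀ j k, ContDiff ℝ 2 (fun q : ℝ × ℝ => inter j k q.1 q.2)

namespace AddRep
variable {p : ℕ}

def toFun (R : AddRep p) (x : Fin p → ℝ) : ℝ :=
  (∑ j, R.main j (x j)) + ∑ j, ∑ k, if j < k then R.inter j k (x j) (x k) else 0

def Gcount (R : AddRep p) : ℕ :=
  Nat.card {j : Fin p // R.main j ≠ 0} +
    Nat.card {q : Fin p × Fin p // q.1 < q.2 ∧ R.inter q.1 q.2 ≠ 0}

end AddRep

def Omega1 (h : ℝ → ℝ) : ℝ := ∫ u in (0:ℝ)..1, (iteratedDeriv 2 h u) ^ 2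

def Omega2 (g : ℝ → ℝ → ℝ) : ℝ :=
  ∫ q in (Set.Icc (0:ℝ) 1) ×ˢ (Set.Icc (0:ℝ) 1),
    ((iteratedDeriv 2 (fun t => g t q.2) q.1) ^ 2
      + (deriv (fun t => deriv (g t) q.2) q.1) ^ 2
      + (iteratedDeriv 2 (g q.1) q.2) ^ 2)

def OmegaGr {p : ℕ} (R : AddRep p) : ℝ :=
  (∑ j, Omega1 (R.main j)) + ∑ j, ∑ k, if j < k then Omega2 (R.inter j k) else 0

def OmegaTildeGr {p : ℕ} (R : AddRep p) : ℝ :=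
  (∑ j, Real.sqrt (Omega1 (R.main j))) +
    ∑ j, ∑ k, if j < k then Real.sqrt (Omega2 (R.inter j k)) else 0

def evalVec {n p : ℕ} (x : Fin n → Fin p → ℝ) (R : AddRep p) : Fin n → ℝ :=
  fun i => R.toFun (x i)

def normSqN {n : ℕ} (v : Fin n → ℝ) : ℝ := (1 / n) * ∑ i, v i ^ 2

def normN {n : ℕ} (v : Fin n → ℝ) : ℝ := Real.sqrt (normSqN v)

def innerN {n : ℕ} (u v : Fin n → ℝ) : ℝ := (1 / n) * ∑ i, u i * v i

def objective {n p : ℕ} (x : Fin n → Fin p → ℝ) (y : Fin n → ℝ) (lam mu : ℝ)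
    (R : AddRep p) : ℝ :=
  normSqN (fun i => y i - evalVec x R i) + lam * OmegaGr R + mu * (R.Gcount : ℝ)

def IsMinimizer {n p : ℕ} (K : ℕ) (x : Fin n → Fin p → ℝ) (y : Fin n → ℝ)
    (lam mu : ℝ) (Rhat : AddRep p) : Prop :=
  Rhat.Gcount ≤ K ∧ ∀ R : AddRep p, R.Gcount ≤ K →
    objective x y lam mu Rhat ≤ objective x y lam mu R

def rn (n : ℕ) : ℝ := (n : ℝ) ^ (-(1/3) : ℝ)

def logep (p : ℕ) : ℝ := Real.log (Real.exp 1 * p)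

def gaussMeasure (n : ℕ) (σ : ℝ) : Measure (Fin n → ℝ) :=
  Measure.pi fun _ : Fin n => gaussianReal 0 ⟨σ ^ 2, sq_nonneg σ⟩

end Census

namespace Census
open Matrix

lemma gauss1_integral (θ : ℝ) (h1 : θ ≤ 1 / 4) :
    ∫ x, Real.exp (θ * x ^ 2) ∂(gaussianReal 0 1) = √(1 / (1 - 2 * θ)) := by
  rw [integral_gaussianReal_eq_integral_smul (by norm_num)]
  have : ∀ x : ℝ, gaussianPDFReal 0 1 x • Real.exp (θ * x ^ 2)
      = (√(2 * Real.pi))⁻¹ * Real.exp (-(1 / 2 - θ) * x ^ 2) := by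
    intro x
    simp only [gaussianPDFReal, smul_eq_mul, NNReal.coe_one, mul_one, sub_zero]
    rw [mul_assoc, ← Real.exp_add]
    congr 2
    ring
  simp_rw [this]
  rw [integral_const_mul, integral_gaussian, ← Real.sqrt_inv, ← Real.sqrt_mul (by positivity)]
  congr 1
  have : (1 / 2 - θ) ≠ 0 := by linarith
  have : (1 - 2 * θ) ≠ 0 := by linarith
  have := Real.pi_ne_zero
  field_simp

lemma gauss1_integrable (θ : ℝ) (h1 : θ ≤ 1 / 4) :
    Integrable (fun x => Real.exp (θ * x ^ 2)) (gaussianReal 0 1) := by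
  by_contra h
  have h2 := integral_undef h
  rw [gauss1_integral θ h1] at h2
  have : 0 < √(1 / (1 - 2 * θ)) := Real.sqrt_pos.2 (one_div_pos.2 (by linarith))
  linarith

lemma gauss1_le (θ : ℝ) (h0 : 0 ≤ θ) (h1 : θ ≤ 1 / 4) :
    ∫ x, Real.exp (θ * x ^ 2) ∂(gaussianReal 0 1) ≤ Real.exp (2 * θ) := by
  rw [gauss1_integral θ h1]
  refine Real.sqrt_le_iff.2 ⟨(Real.exp_pos _).le, ?_⟩
  rw [← Real.exp_nat_mul]
  have h3 := Real.add_one_le_exp (4 * θ)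
  rw [div_le_iff₀ (by linarith)]
  have : ((2 : ℕ) : ℝ) * (2 * θ) = 4 * θ := by push_cast; ring
  rw [this]
  nlinarith [Real.exp_pos (4 * θ)]

/-- Exponential tail of a diagonal Gaussian quadratic form. -/
lemma diag_tail (n : ℕ) (l : Fin n → ℝ) (h0 : ∀ i, 0 ≤ l i) (h1 : ∀ i, l i ≤ 1)
    (D u : ℝ) (hD : ∑ i, l i ≤ D) :
    (Measure.pi fun _ : Fin n => gaussianReal 0 1) {x | u < ∑ i, l i * x i ^ 2} ≤
      ENNReal.ofReal (Real.exp (D / 2 - u / 4)) := by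
  set μ := (Measure.pi fun _ : Fin n => gaussianReal 0 1)
  have hint : Integrable (fun x : Fin n → ℝ => ∏ i, Real.exp (l i / 4 * x i ^ 2)) μ :=
    Integrable.fintype_prod (f := fun i (x : ℝ) => Real.exp (l i / 4 * x ^ 2))
      (fun i => gauss1_integrable _ (by linarith [h1 i]))
  have hval : ∫ x, ∏ i, Real.exp (l i / 4 * x i ^ 2) ∂μ ≤ Real.exp (D / 2) := by
    rw [integral_fintype_prod_eq_prod (f := fun i (x : ℝ) => Real.exp (l i / 4 * x ^ 2))]
    calc _ ≤ ∏ i, Real.exp (2 * (l i / 4)) := by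
          refine Finset.prod_le_prod (fun i _ => integral_nonneg (fun x => (Real.exp_pos _).le)) ?_
          intro i _
          exact gauss1_le _ (by linarith [h0 i]) (by linarith [h1 i])
      _ = Real.exp (∑ i, 2 * (l i / 4)) := (Real.exp_sum _ _).symm
      _ ≤ _ := by
          apply Real.exp_le_exp.2
          rw [← Finset.mul_sum, ← Finset.sum_div]; linarith
  have hmk := mul_meas_ge_le_integral_of_nonneg (μ := μ)
    (f := fun x : Fin n → ℝ => ∏ i, Real.exp (l i / 4 * x i ^ 2))
    (Filter.Eventually.of_forall (fun x => Finset.prod_nonneg fun i _ => (Real.exp_pos _).le))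
    hint (Real.exp (u / 4))
  have hsub : {x : Fin n → ℝ | u < ∑ i, l i * x i ^ 2} ⊆
      {x | Real.exp (u / 4) ≤ ∏ i, Real.exp (l i / 4 * x i ^ 2)} := by
    intro x hx
    simp only [Set.mem_ofPred_eq] at hx ⊢
    rw [← Real.exp_sum]
    apply Real.exp_le_exp.2
    have : ∑ i, l i / 4 * x i ^ 2 = (∑ i, l i * x i ^ 2) / 4 := by
      rw [Finset.sum_div]; exact Finset.sum_congr rfl fun i _ => by ring
    rw [this]; linarith
  refine (measure_mono hsub).trans ?_
  rw [← ofReal_measureReal]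
  apply ENNReal.ofReal_le_ofReal
  rw [Real.exp_sub, le_div_iff₀ (Real.exp_pos _), mul_comm]
  exact hmk.trans hval

lemma eig_form {n : ℕ} (M : Matrix (Fin n) (Fin n) ℝ) (hM : M.PosSemidef) (x : Fin n → ℝ) :
    let z := ∑ i, x i • (hM.1.eigenvectorBasis i).ofLp
    z ⬝ᵥ M *ᵥ z = ∑ i, hM.1.eigenvalues i * x i ^ 2 := by
  intro z
  have hb : ∀ i j, (hM.1.eigenvectorBasis i).ofLp ⬝ᵥ (hM.1.eigenvectorBasis j).ofLp
      = if i = j then 1 else 0 := by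
    intro i j
    have := hM.1.eigenvectorBasis.inner_eq_ite j i
    rw [EuclideanSpace.inner_eq_star_dotProduct] at this
    simp only [star_trivial] at this
    rw [this]
    simp [eq_comm]
  have hz : M *ᵥ z = ∑ i, (x i * hM.1.eigenvalues i) • (hM.1.eigenvectorBasis i).ofLp := by
    simp only [z, mulVec_sum, mulVec_smul]
    refine Finset.sum_congr rfl fun i _ => ?_
    rw [hM.1.mulVec_eigenvectorBasis, smul_smul]
  rw [hz]
  simp only [z, sum_dotProduct, dotProduct_sum, smul_dotProduct, dotProduct_smul, hb]
  simp
  refine Finset.sum_congr rfl fun i _ => by ring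

/-- Exponential tail of a Gaussian quadratic form. -/
lemma quad_tail (n : ℕ) (M : Matrix (Fin n) (Fin n) ℝ) (hM : M.PosSemidef)
    (hop : ∀ a : Fin n → ℝ, a ⬝ᵥ M *ᵥ a ≤ a ⬝ᵥ a) (D : ℝ) (htr : M.trace ≤ D)
    (σ : ℝ) (u : ℝ) (hσ : 0 < σ) :
    gaussMeasure n σ {ε | σ ^ 2 * u < ε ⬝ᵥ M *ᵥ ε} ≤
      ENNReal.ofReal (Real.exp (D / 2 - u / 4)) := by
  have hq : Measurable fun a : Fin n → ℝ => a ⬝ᵥ M *ᵥ a := by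
    apply Continuous.measurable
    fun_prop
  have hscale : gaussMeasure n σ =
      (Measure.pi fun _ : Fin n => gaussianReal 0 1).map (fun x i => σ * x i) := by
    rw [Measure.pi_map_pi (μ := fun _ : Fin n => gaussianReal 0 1)
      (f := fun _ y => σ * y) (fun i => by fun_prop)]
    unfold gaussMeasure
    congr 1
    funext i
    rw [gaussianReal_map_const_mul]
    simp
    rfl
  have hstep1 : gaussMeasure n σ {ε | σ ^ 2 * u < ε ⬝ᵥ M *ᵥ ε} =
      (Measure.pi fun _ : Fin n => gaussianReal 0 1) {ε | u < ε ⬝ᵥ M *ᵥ ε} := by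
    rw [hscale, Measure.map_apply (by fun_prop) (measurableSet_lt measurable_const hq)]
    congr 1
    ext x
    simp only [Set.mem_preimage, Set.mem_ofPred_eq]
    have : (fun i => σ * x i) = σ • x := rfl
    rw [this, mulVec_smul, smul_dotProduct, dotProduct_smul, smul_smul, smul_eq_mul, ← sq]
    exact mul_lt_mul_iff_right₀ (by positivity)
  have hq2 : Measurable fun a : EuclideanSpace ℝ (Fin n) => a.ofLp ⬝ᵥ M *ᵥ a.ofLp := by
    apply Continuous.measurable
    fun_prop
  have hstep2 : (Measure.pi fun _ : Fin n => gaussianReal 0 1) {ε | u < ε ⬝ᵥ M *ᵥ ε} =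
      (Measure.pi fun _ : Fin n => gaussianReal 0 1)
        {x | u < ∑ i, hM.1.eigenvalues i * x i ^ 2} := by
    have e1 := map_pi_eq_stdGaussian (ι := Fin n)
    rw [stdGaussian_eq_map_pi_orthonormalBasis hM.1.eigenvectorBasis] at e1
    have e2 := congrArg (fun m => m {a : EuclideanSpace ℝ (Fin n) | u < a.ofLp ⬝ᵥ M *ᵥ a.ofLp}) e1
    simp only at e2
    rw [Measure.map_apply (by fun_prop) (measurableSet_lt measurable_const hq2),
      Measure.map_apply (by fun_prop) (measurableSet_lt measurable_const hq2)] at e2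
    refine Eq.trans ?_ (e2.trans ?_)
    · rfl
    · congr 1
      ext x
      simp only [Set.mem_preimage, Set.mem_ofPred_eq]
      rw [← eig_form M hM x]
      simp
  rw [hstep1, hstep2]
  refine diag_tail n _ hM.eigenvalues_nonneg ?_ D u ?_
  · intro i
    have h1 := hop (hM.1.eigenvectorBasis i).ofLp
    rw [hM.1.mulVec_eigenvectorBasis, dotProduct_smul] at h1
    have h2 := hM.1.eigenvectorBasis.inner_eq_one i
    rw [EuclideanSpace.inner_eq_star_dotProduct] at h2
    simp only [star_trivial] at h2
    rw [h2] at h1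
    simpa using h1
  · have := hM.1.trace_eq_sum_eigenvalues
    simp at this
    linarith

end Census

namespace Census
open Matrix UniformSpace

lemma riesz_exists {W : Type*} [SeminormedAddCommGroup W] [InnerProductSpace ℝ W]
    (l : W →ₗ[ℝ] ℝ) (c : ℝ) (h : ∀ g, |l g| ≤ c * ‖g‖) :
    ∃ k : Completion W, ∀ g : W, inner ℝ k (g : Completion W) = l g := by
  let l' : W →L[ℝ] ℝ := l.mkContinuous c h
  let e : W →L[ℝ] Completion W := Completion.toComplL
  refine ⟨(InnerProductSpace.toDual ℝ (Completion W)).symm (l'.extend e), fun g => ?_⟩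
  rw [InnerProductSpace.toDual_symm_apply]
  exact ContinuousLinearMap.extend_eq l' (e := e) (Completion.denseRange_coe)
    (Completion.isUniformInducing_coe W) g

lemma completion_norm_le {W : Type*} [SeminormedAddCommGroup W] [InnerProductSpace ℝ W]
    (w : Completion W) (c : ℝ) (h : ∀ g : W, |inner ℝ w (g : Completion W)| ≤ c * ‖g‖) :
    ‖w‖ * ‖w‖ ≤ c * ‖w‖ := by
  have key : ∀ x : Completion W, |inner ℝ w x| ≤ c * ‖x‖ := by
    intro x
    induction x using Completion.induction_on with
    | hp => exact isClosed_le (by fun_prop) (by fun_prop)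
    | ih a => simpa using h a
  have := key w
  rw [real_inner_self_eq_norm_mul_norm, abs_of_nonneg (by positivity)] at this
  exact this

lemma riesz_gram_semi {n : ℕ} {W : Type*} [SeminormedAddCommGroup W] [InnerProductSpace ℝ W]
    (L : Fin n → (W →ₗ[ℝ] ℝ)) (b : Fin n → ℝ) (hb0 : ∀ i, 0 ≤ b i) (t : ℝ) (ht : 0 ≤ t)
    (hb : ∀ i g, (L i g) ^ 2 ≤ b i * ‖g‖ ^ 2)
    (hop : ∀ g, ∑ i, (L i g) ^ 2 ≤ t * ‖g‖ ^ 2) :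
    ∃ M : Matrix (Fin n) (Fin n) ℝ, M.PosSemidef ∧ M.trace ≤ ∑ i, b i ∧
      (∀ a : Fin n → ℝ, a ⬝ᵥ M *ᵥ a ≤ t * (a ⬝ᵥ a)) ∧
      ∀ (a : Fin n → ℝ) g, (∑ i, a i * L i g) ^ 2 ≤ (a ⬝ᵥ M *ᵥ a) * ‖g‖ ^ 2 := by
  have hb' : ∀ i g, |L i g| ≤ √(b i) * ‖g‖ := by
    intro i g
    apply abs_le_of_sq_le_sq
    · rw [mul_pow, Real.sq_sqrt (hb0 i)]; exact hb i g
    · positivity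
  choose k hk using fun i => riesz_exists (L i) _ (hb' i)
  have hform : ∀ a : Fin n → ℝ, a ⬝ᵥ (gram ℝ k) *ᵥ a = ‖∑ i, a i • k i‖ ^ 2 := by
    intro a
    have := star_dotProduct_gram_mulVec (𝕜 := ℝ) k a a
    rw [star_trivial] at this
    rw [this, real_inner_self_eq_norm_sq]
  have hin : ∀ (a : Fin n → ℝ) (g : W),
      inner ℝ (∑ i, a i • k i) (g : Completion W) = ∑ i, a i * L i g := by
    intro a g
    rw [sum_inner]
    refine Finset.sum_congr rfl fun i _ => ?_
    rw [real_inner_smul_left, hk]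
  refine ⟨gram ℝ k, posSemidef_gram _ _, ?_, ?_, ?_⟩
  · refine Finset.sum_le_sum fun i _ => ?_
    simp only [diag_apply, gram_apply, real_inner_self_eq_norm_sq]
    have h1 := completion_norm_le (k i) (√(b i)) (fun g => by rw [hk]; exact hb' i g)
    have h2 := Real.sq_sqrt (hb0 i)
    by_cases h0 : ‖k i‖ = 0
    · rw [h0]; simpa using hb0 i
    · have h3 : 0 < ‖k i‖ := lt_of_le_of_ne (norm_nonneg _) (Ne.symm h0)
      have h4 : ‖k i‖ ≤ √(b i) := le_of_mul_le_mul_right h1 h3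
      rw [← h2]; gcongr
  · intro a
    rw [hform]
    set w := ∑ i, a i • k i
    have haa : 0 ≤ a ⬝ᵥ a := by
      simp only [dotProduct]; exact Finset.sum_nonneg fun i _ => mul_self_nonneg _
    have h1 := completion_norm_le w (√(t * (a ⬝ᵥ a))) (fun g => by
      rw [hin]
      apply abs_le_of_sq_le_sq
      · rw [mul_pow, Real.sq_sqrt (by positivity)]
        calc (∑ i, a i * L i g) ^ 2 ≤ (∑ i, a i ^ 2) * ∑ i, (L i g) ^ 2 :=
              Finset.sum_mul_sq_le_sq_mul_sq _ _ _
          _ ≤ (∑ i, a i ^ 2) * (t * ‖g‖ ^ 2) := by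
              gcongr
              exact hop g
          _ = _ := by simp only [dotProduct, ← sq]; ring
      · positivity)
    have h2 := Real.sq_sqrt (mul_nonneg ht haa)
    by_cases h0 : ‖w‖ = 0
    · rw [h0]; simpa using mul_nonneg ht haa
    · have h3 : 0 < ‖w‖ := lt_of_le_of_ne (norm_nonneg _) (Ne.symm h0)
      have h4 : ‖w‖ ≤ _ := le_of_mul_le_mul_right h1 h3
      rw [← h2]; gcongr
  · intro a g
    rw [hform, ← hin]
    have := abs_real_inner_le_norm (∑ i, a i • k i) (g : Completion W)
    rw [Completion.norm_coe] at this
    rw [← mul_pow]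
    exact sq_le_sq.2 (by rwa [abs_of_nonneg (a := ‖∑ i, a i • k i‖ * ‖g‖) (by positivity)])

lemma riesz_gram {n : ℕ} {W : Type*} [AddCommGroup W] [Module ℝ W]
    (B : W → W → ℝ) (hsymm : ∀ g h, B g h = B h g) (hnn : ∀ g, 0 ≤ B g g)
    (hadd : ∀ g h k, B (g + h) k = B g k + B h k) (hsmul : ∀ g h (r : ℝ), B (r • g) h = r * B g h)
    (L : Fin n → (W →ₗ[ℝ] ℝ)) (b : Fin n → ℝ) (hb0 : ∀ i, 0 ≤ b i) (t : ℝ) (ht : 0 ≤ t)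
    (hb : ∀ i g, (L i g) ^ 2 ≤ b i * B g g)
    (hop : ∀ g, ∑ i, (L i g) ^ 2 ≤ t * B g g) :
    ∃ M : Matrix (Fin n) (Fin n) ℝ, M.PosSemidef ∧ M.trace ≤ ∑ i, b i ∧
      (∀ a : Fin n → ℝ, a ⬝ᵥ M *ᵥ a ≤ t * (a ⬝ᵥ a)) ∧
      ∀ (a : Fin n → ℝ) g, (∑ i, a i * L i g) ^ 2 ≤ (a ⬝ᵥ M *ᵥ a) * B g g := by
  let core : PreInnerProductSpace.Core ℝ W :=
    { inner := B
      conj_inner_symm := fun x y => by simpa using hsymm y x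
      re_inner_nonneg := fun x => by simpa using hnn x
      add_left := fun x y z => hadd x y z
      smul_left := fun x y r => by simpa using hsmul x y r }
  letI : SeminormedAddCommGroup W :=
    @InnerProductSpace.Core.toSeminormedAddCommGroup ℝ W _ _ _ core
  letI : InnerProductSpace ℝ W := InnerProductSpace.ofCore core
  have hB : ∀ g : W, ‖g‖ ^ 2 = B g g := fun g => (real_inner_self_eq_norm_sq g).symm
  have := riesz_gram_semi L b hb0 t ht (fun i g => by rw [hB]; exact hb i g)
    (fun g => by rw [hB]; exact hop g)
  simpa only [hB] using this

end Census

namespace Census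

/-- Second derivative of `g` at `z`. -/
def Hs (g : ℝ × ℝ → ℝ) (z : ℝ × ℝ) : (ℝ × ℝ) →L[ℝ] (ℝ × ℝ) →L[ℝ] ℝ := fderiv ℝ (fderiv ℝ g) z

/-- Polarised integrand of the roughness penalty. -/
def DD (g k : ℝ × ℝ → ℝ) (z : ℝ × ℝ) : ℝ :=
  Hs g z (1, 0) (1, 0) * Hs k z (1, 0) (1, 0) + Hs g z (1, 0) (0, 1) * Hs k z (1, 0) (0, 1)
    + Hs g z (0, 1) (0, 1) * Hs k z (0, 1) (0, 1)

lemma Hs_cont {g : ℝ × ℝ → ℝ} (hg : ContDiff ℝ 2 g) : Continuous (Hs g) := by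
  have h1 : ContDiff ℝ 1 (fderiv ℝ g) := hg.fderiv_right (by norm_num)
  exact h1.continuous_fderiv (by norm_num)

lemma fd_cont {g : ℝ × ℝ → ℝ} (hg : ContDiff ℝ 2 g) : Continuous (fderiv ℝ g) :=
  hg.continuous_fderiv (by norm_num)

lemma DD_cont {g k : ℝ × ℝ → ℝ} (hg : ContDiff ℝ 2 g) (hk : ContDiff ℝ 2 k) :
    Continuous (DD g k) := by
  have := Hs_cont hg
  have := Hs_cont hk
  unfold DD
  fun_prop

lemma DD_nonneg (g : ℝ × ℝ → ℝ) (z) : 0 ≤ DD g g z := by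
  unfold DD
  nlinarith [mul_self_nonneg (Hs g z (1, 0) (1, 0)), mul_self_nonneg (Hs g z (1, 0) (0, 1)),
    mul_self_nonneg (Hs g z (0, 1) (0, 1))]

lemma Hs_symm {g : ℝ × ℝ → ℝ} (hg : ContDiff ℝ 2 g) (z v w) : Hs g z v w = Hs g z w v := by
  have := (hg.contDiffAt (x := z)).isSymmSndFDerivAt (by simp)
  exact this v w

lemma Hs_sq_le {g : ℝ × ℝ → ℝ} (hg : ContDiff ℝ 2 g) (z d : ℝ × ℝ) (h : ℝ)
    (h1 : |d.1| ≤ h) (h2 : |d.2| ≤ h) : (Hs g z d d) ^ 2 ≤ 6 * h ^ 4 * DD g g z := by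
  have hd : d = d.1 • ((1, 0) : ℝ × ℝ) + d.2 • ((0, 1) : ℝ × ℝ) := by ext <;> simp
  have e : Hs g z d d = d.1 ^ 2 * Hs g z (1, 0) (1, 0) + 2 * (d.1 * d.2) * Hs g z (1, 0) (0, 1)
      + d.2 ^ 2 * Hs g z (0, 1) (0, 1) := by
    conv_lhs => rw [hd]
    simp only [map_add, map_smul, _root_.add_apply, _root_.smul_apply,
      smul_eq_mul, Hs_symm hg z (0, 1) (1, 0)]
    ring
  rw [e]
  set A := Hs g z (1, 0) (1, 0)
  set B := Hs g z (1, 0) (0, 1)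
  set C := Hs g z (0, 1) (0, 1)
  have hD : DD g g z = A * A + B * B + C * C := rfl
  rw [hD]
  set p := d.1
  set q := d.2
  have hp : p ^ 2 ≤ h ^ 2 := sq_le_sq.2 (h1.trans (le_abs_self h))
  have hq : q ^ 2 ≤ h ^ 2 := sq_le_sq.2 (h2.trans (le_abs_self h))
  have cs : (p ^ 2 * A + 2 * (p * q) * B + q ^ 2 * C) ^ 2 ≤
      ((p ^ 2) ^ 2 + (2 * (p * q)) ^ 2 + (q ^ 2) ^ 2) * (A * A + B * B + C * C) := by
    nlinarith [sq_nonneg (p ^ 2 * B - 2 * (p * q) * A), sq_nonneg (p ^ 2 * C - q ^ 2 * A),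
      sq_nonneg (2 * (p * q) * C - q ^ 2 * B)]
  refine cs.trans ?_
  have hS : 0 ≤ A * A + B * B + C * C := by
    nlinarith [mul_self_nonneg A, mul_self_nonneg B, mul_self_nonneg C]
  apply mul_le_mul_of_nonneg_right _ hS
  have e1 : (p ^ 2) ^ 2 ≤ (h ^ 2) ^ 2 := by gcongr
  have e2 : (q ^ 2) ^ 2 ≤ (h ^ 2) ^ 2 := by gcongr
  have e3 : p ^ 2 * q ^ 2 ≤ h ^ 2 * h ^ 2 := by gcongr
  nlinarith

lemma taylor2 {g : ℝ × ℝ → ℝ} (hg : ContDiff ℝ 2 g) (x y : ℝ × ℝ) :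
    g x - g y + fderiv ℝ g y (y - x) =
      ∫ t in (0:ℝ)..1, t * Hs g (x + t • (y - x)) (y - x) (y - x) := by
  set d := y - x
  have hl : ∀ t : ℝ, HasDerivAt (fun t : ℝ => x + t • d) d t := by
    intro t
    have := ((hasDerivAt_id t).smul_const d).const_add x
    simpa using this
  have h1 : ∀ t : ℝ, HasDerivAt (fun t : ℝ => g (x + t • d)) (fderiv ℝ g (x + t • d) d) t := by
    intro t
    exact ((hg.differentiable (by norm_num) _).hasFDerivAt).comp_hasDerivAt t (hl t)
  have hfd : Differentiable ℝ (fderiv ℝ g) :=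
    (hg.fderiv_right (m := 1) (by norm_num)).differentiable (by norm_num)
  have h2 : ∀ t : ℝ, HasDerivAt (fun t : ℝ => fderiv ℝ g (x + t • d) d)
      (Hs g (x + t • d) d d) t := by
    intro t
    have := ((hfd (x + t • d)).hasFDerivAt).comp_hasDerivAt t (hl t)
    have h3 := this.clm_apply (hasDerivAt_const t d)
    simpa [Hs] using h3
  have h3 : ∀ t ∈ Set.uIcc (0:ℝ) 1, HasDerivAt
      (fun t : ℝ => t * fderiv ℝ g (x + t • d) d - g (x + t • d))
      (t * Hs g (x + t • d) d d) t := by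
    intro t _
    have := ((hasDerivAt_id t).mul (h2 t)).sub (h1 t)
    refine HasDerivAt.congr_deriv (f := fun t : ℝ => t * fderiv ℝ g (x + t • d) d
      - g (x + t • d)) this ?_
    simp
  have hc := Hs_cont hg
  rw [intervalIntegral.integral_eq_sub_of_hasDerivAt h3
    (Continuous.intervalIntegrable (by fun_prop) _ _)]
  have : x + d = y := by simp [d]
  simp [this]
  ring

/-- Rescaling inequality. -/
lemma scale_le {D : ℝ × ℝ → ℝ} (hD : Continuous D) (hD0 : ∀ z, 0 ≤ D z) {Q : Set (ℝ × ℝ)}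
    (hQ : IsCompact Q) (hconv : Convex ℝ Q) {x : ℝ × ℝ} (hx : x ∈ Q) {t : ℝ}
    (ht : t ∈ Set.Ioc (0:ℝ) 1) :
    t ^ 2 * ∫ y in Q, D (x + t • (y - x)) ≤ ∫ y in Q, D y := by
  have hm : MeasurableSet Q := hQ.measurableSet
  set G := Q.indicator D
  have hGi : Integrable G := by
    rw [integrable_indicator_iff hm]
    exact hD.continuousOn.integrableOn_compact hQ
  have hG0 : ∀ z, 0 ≤ G z := fun z => Set.indicator_nonneg (fun z _ => hD0 z) z
  have e1 : ∫ y in Q, D (x + t • (y - x)) ≤ ∫ y, G ((1 - t) • x + t • y) := by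
    rw [← integral_indicator hm]
    refine integral_mono_of_nonneg (Filter.Eventually.of_forall fun y => ?_) ?_
      (Filter.Eventually.of_forall fun y => ?_)
    · exact Set.indicator_nonneg (fun z _ => hD0 _) y
    · exact (hGi.comp_add_left ((1 - t) • x)).comp_smul ht.1.ne'
    · by_cases hy : y ∈ Q
      · simp only [Set.indicator_of_mem hy]
        have hz : (1 - t) • x + t • y ∈ Q := hconv hx hy (by linarith [ht.2]) ht.1.le (by ring)
        simp only [G, Set.indicator_of_mem hz]
        apply le_of_eq
        congr 1
        module
      · simp only [Set.indicator_of_notMem hy]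
        exact hG0 _
  have e2 : ∫ y, G ((1 - t) • x + t • y) = (t ^ 2)⁻¹ * ∫ y in Q, D y := by
    have := Measure.integral_comp_smul (volume : Measure (ℝ × ℝ))
      (fun w => G ((1 - t) • x + w)) t
    rw [this, integral_add_left_eq_self, integral_indicator hm]
    simp [Module.finrank_prod]
  rw [e2] at e1
  have ht2 : 0 < t ^ 2 := by have := ht.1; positivity
  calc _ ≤ t ^ 2 * ((t ^ 2)⁻¹ * ∫ y in Q, D y) := by gcongr
    _ = _ := by rw [← mul_assoc, mul_inv_cancel₀ ht2.ne', one_mul]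

/-- Averaged Taylor polynomial approximation on a square of side `h`. -/
lemma approx_square {g : ℝ × ℝ → ℝ} (hg : ContDiff ℝ 2 g) {a b h : ℝ} (hh : 0 < h)
    {x : ℝ × ℝ} (hx : x ∈ Set.Icc a (a + h) ×ˢ Set.Icc b (b + h)) :
    (g x - (h ^ 2)⁻¹ * ∫ y in Set.Icc a (a + h) ×ˢ Set.Icc b (b + h),
        (g y - fderiv ℝ g y (y - x))) ^ 2 ≤
      6 * h ^ 2 * ∫ y in Set.Icc a (a + h) ×ˢ Set.Icc b (b + h), DD g g y := by
  set Q := Set.Icc a (a + h) ×ˢ Set.Icc b (b + h) with hQdef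
  have hQ : IsCompact Q := isCompact_Icc.prod isCompact_Icc
  have hconv : Convex ℝ Q := (convex_Icc _ _).prod (convex_Icc _ _)
  have hm : MeasurableSet Q := hQ.measurableSet
  have hvol : (volume.real Q) = h ^ 2 := by
    rw [hQdef, Measure.volume_eq_prod, measureReal_prod_prod]
    simp [hh.le, sq]
  have hHc := Hs_cont hg
  have hfc := fd_cont hg
  have hgc := hg.continuous
  have hDc := DD_cont hg hg
  set S := ∫ y in Q, DD g g y
  set E := g x - (h ^ 2)⁻¹ * ∫ y in Q, (g y - fderiv ℝ g y (y - x)) with hE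
  have hEint : h ^ 2 * E = ∫ y in Q, (g x - g y + fderiv ℝ g y (y - x)) := by
    have i1 : IntegrableOn (fun y => g y - fderiv ℝ g y (y - x)) Q :=
      Continuous.continuousOn (by fun_prop) |>.integrableOn_compact hQ
    have i0 : IntegrableOn (fun _ : ℝ × ℝ => g x) Q :=
      continuousOn_const.integrableOn_compact hQ
    have : ∀ y, g x - g y + fderiv ℝ g y (y - x) = g x - (g y - fderiv ℝ g y (y - x)) := by
      intro y; ring
    simp_rw [this]
    rw [integral_sub i0 i1, setIntegral_const, hvol, hE, smul_eq_mul]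
    field_simp
  by_cases hE0 : E = 0
  · rw [hE0]
    have : 0 ≤ S := setIntegral_nonneg hm fun y _ => DD_nonneg g y
    simp; positivity
  set α := |E|
  have hα : 0 < α := abs_pos.2 hE0
  -- pointwise bound
  let F : ℝ × ℝ → ℝ → ℝ := fun y t => t ^ 2 * DD g g (x + t • (y - x))
  have hFc : Continuous (Function.uncurry F) := by
    simp only [F, Function.uncurry_def]
    fun_prop
  have hFc1 : ∀ y, Continuous (F y) := fun y => by simp only [F]; fun_prop
  have hFc2 : ∀ t, Continuous (fun y => F y t) := fun t => by simp only [F]; fun_prop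
  have hpt : ∀ y ∈ Q, |g x - g y + fderiv ℝ g y (y - x)| ≤
      α / 2 + 3 * h ^ 4 / α * ∫ t in Set.Ioc (0:ℝ) 1, F y t := by
    intro y hy
    have hd1 : |(y - x).1| ≤ h := by
      have := hy.1; have := hx.1; simp only [Set.mem_Icc] at *
      rw [Prod.fst_sub, abs_le]; constructor <;> linarith
    have hd2 : |(y - x).2| ≤ h := by
      have := hy.2; have := hx.2; simp only [Set.mem_Icc] at *
      rw [Prod.snd_sub, abs_le]; constructor <;> linarith
    rw [taylor2 hg, intervalIntegral.integral_of_le zero_le_one]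
    have hi : IntegrableOn (F y) (Set.Ioc (0:ℝ) 1) :=
      (hFc1 y).integrableOn_Ioc
    have hi2 : IntegrableOn (fun t : ℝ => t * Hs g (x + t • (y - x)) (y - x) (y - x))
        (Set.Ioc (0:ℝ) 1) := Continuous.integrableOn_Ioc (by fun_prop)
    have hbd : ∀ t : ℝ, |t * Hs g (x + t • (y - x)) (y - x) (y - x)| ≤
        α / 2 + 3 * h ^ 4 / α * F y t := by
      intro t
      set s := t * Hs g (x + t • (y - x)) (y - x) (y - x)
      have h1 : s ^ 2 ≤ 6 * h ^ 4 * F y t := by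
        have := Hs_sq_le hg (x + t • (y - x)) (y - x) h hd1 hd2
        simp only [s, F, mul_pow]
        nlinarith [sq_nonneg t]
      have h2 : 2 * α * |s| ≤ α ^ 2 + s ^ 2 := by
        nlinarith [sq_nonneg (α - |s|), sq_abs s]
      have h3 : α / 2 + 3 * h ^ 4 / α * F y t = (α ^ 2 + 6 * h ^ 4 * F y t) / (2 * α) := by
        field_simp; ring
      rw [h3, le_div_iff₀ (by positivity)]
      linarith
    calc |∫ t in Set.Ioc (0:ℝ) 1, t * Hs g (x + t • (y - x)) (y - x) (y - x)|
        ≤ ∫ t in Set.Ioc (0:ℝ) 1, |t * Hs g (x + t • (y - x)) (y - x) (y - x)| :=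
          abs_integral_le_integral_abs
      _ ≤ ∫ t in Set.Ioc (0:ℝ) 1, (α / 2 + 3 * h ^ 4 / α * F y t) := by
          refine integral_mono hi2.abs ?_ (fun t => hbd t)
          exact (integrable_const _).add (hi.const_mul _)
      _ = _ := by
          rw [integral_add (integrable_const _) (hi.const_mul _), integral_const_mul]
          simp
  have hprod : Integrable (Function.uncurry F)
      ((volume.restrict Q).prod (volume.restrict (Set.Ioc (0:ℝ) 1))) := by
    rw [Measure.prod_restrict]
    refine IntegrableOn.mono_set ?_ (Set.prod_mono_right Set.Ioc_subset_Icc_self)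
    exact hFc.continuousOn.integrableOn_compact (hQ.prod isCompact_Icc)
  have hJ : ∫ y in Q, ∫ t in Set.Ioc (0:ℝ) 1, F y t ≤ S := by
    rw [integral_integral_swap hprod]
    calc ∫ t in Set.Ioc (0:ℝ) 1, ∫ y in Q, F y t
        ≤ ∫ t in Set.Ioc (0:ℝ) 1, S := by
          refine setIntegral_mono_on hprod.integral_prod_right (integrable_const _)
            measurableSet_Ioc ?_
          intro t ht
          simp only [F]
          rw [integral_const_mul]
          exact scale_le hDc (DD_nonneg g) hQ hconv hx ht
      _ = S := by simp
  have hfin : h ^ 2 * α ≤ h ^ 2 * (α / 2) + 3 * h ^ 4 / α * S := by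
    calc h ^ 2 * α = |h ^ 2 * E| := by rw [abs_mul, abs_of_pos (by positivity)]
      _ = |∫ y in Q, (g x - g y + fderiv ℝ g y (y - x))| := by rw [hEint]
      _ ≤ ∫ y in Q, |g x - g y + fderiv ℝ g y (y - x)| := abs_integral_le_integral_abs
      _ ≤ ∫ y in Q, (α / 2 + 3 * h ^ 4 / α * ∫ t in Set.Ioc (0:ℝ) 1, F y t) := by
          have i1 : IntegrableOn (fun y => |g x - g y + fderiv ℝ g y (y - x)|) Q :=
            Continuous.continuousOn (by fun_prop) |>.integrableOn_compact hQ
          refine setIntegral_mono_on i1 ?_ hm hpt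
          exact (continuousOn_const.integrableOn_compact hQ).add
            (hprod.integral_prod_left.const_mul _)
      _ = h ^ 2 * (α / 2) + 3 * h ^ 4 / α * ∫ y in Q, ∫ t in Set.Ioc (0:ℝ) 1, F y t := by
          have i2 : Integrable (fun y => 3 * h ^ 4 / α * ∫ t in Set.Ioc (0:ℝ) 1, F y t)
              (volume.restrict Q) := hprod.integral_prod_left.const_mul _
          rw [integral_add (continuousOn_const.integrableOn_compact hQ) i2, integral_const_mul, setIntegral_const, hvol,
            smul_eq_mul]
      _ ≤ _ := by gcongr
  have h5 : α ^ 2 ≤ 6 * h ^ 2 * S := by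
    have h6 : h ^ 2 * (α / 2) ≤ 3 * h ^ 4 / α * S := by linarith
    have h7 : 3 * h ^ 4 / α * S = h ^ 2 * (3 * h ^ 2 * S / α) := by ring
    rw [h7] at h6
    have h8 := le_of_mul_le_mul_left h6 (by positivity)
    rw [le_div_iff₀ hα] at h8
    nlinarith
  rw [← sq_abs]
  exact h5

end Census

namespace Census

/-- The unit square. -/
def sq01 : Set (ℝ × ℝ) := Set.Icc (0:ℝ) 1 ×ˢ Set.Icc (0:ℝ) 1

/-- Roughness of a function on the unit square. -/
def Om (g : ℝ × ℝ → ℝ) : ℝ := ∫ q in sq01, DD g g q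

lemma deriv_line {g : ℝ × ℝ → ℝ} (hg : Differentiable ℝ g) (x d : ℝ × ℝ) (l : ℝ → ℝ × ℝ) (t : ℝ)
    (hl : HasDerivAt l d t) (hx : l t = x) :
    deriv (fun t => g (l t)) t = fderiv ℝ g x d := by
  subst hx
  exact (((hg _).hasFDerivAt).comp_hasDerivAt t hl).deriv

lemma deriv_line2 {g : ℝ × ℝ → ℝ} (hg : ContDiff ℝ 2 g) (x d e : ℝ × ℝ) (l : ℝ → ℝ × ℝ) (t : ℝ)
    (hl : HasDerivAt l d t) (hx : l t = x) :
    deriv (fun t => fderiv ℝ g (l t) e) t = Hs g x d e := by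
  subst hx
  have hfd : Differentiable ℝ (fderiv ℝ g) :=
    (hg.fderiv_right (m := 1) (by norm_num)).differentiable (by norm_num)
  have := ((hfd (l t)).hasFDerivAt).comp_hasDerivAt t hl
  have h3 := this.clm_apply (hasDerivAt_const t e)
  have h4 := h3.deriv
  simpa [Hs] using h4

lemma line1 (v t : ℝ) : HasDerivAt (fun t : ℝ => ((t, v) : ℝ × ℝ)) (1, 0) t :=
  (hasDerivAt_id t).prodMk (hasDerivAt_const t v)

lemma line2 (u t : ℝ) : HasDerivAt (fun t : ℝ => ((u, t) : ℝ × ℝ)) (0, 1) t :=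
  (hasDerivAt_const t u).prodMk (hasDerivAt_id t)

lemma second_uu {g : ℝ × ℝ → ℝ} (hg : ContDiff ℝ 2 g) (u v : ℝ) :
    iteratedDeriv 2 (fun t => g (t, v)) u = Hs g (u, v) (1, 0) (1, 0) := by
  have hd : Differentiable ℝ g := hg.differentiable (by norm_num)
  have h1 : deriv (fun t => g (t, v)) = fun t => fderiv ℝ g (t, v) (1, 0) := by
    funext t
    exact deriv_line hd _ _ (fun t => (t, v)) t (line1 v t) rfl
  rw [iteratedDeriv_succ, iteratedDeriv_one, h1]
  exact deriv_line2 hg _ _ _ (fun t => (t, v)) u (line1 v u) rfl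

lemma second_vv {g : ℝ × ℝ → ℝ} (hg : ContDiff ℝ 2 g) (u v : ℝ) :
    iteratedDeriv 2 (fun t => g (u, t)) v = Hs g (u, v) (0, 1) (0, 1) := by
  have hd : Differentiable ℝ g := hg.differentiable (by norm_num)
  have h1 : deriv (fun t => g (u, t)) = fun t => fderiv ℝ g (u, t) (0, 1) := by
    funext t
    exact deriv_line hd _ _ (fun t => (u, t)) t (line2 u t) rfl
  rw [iteratedDeriv_succ, iteratedDeriv_one, h1]
  exact deriv_line2 hg _ _ _ (fun t => (u, t)) v (line2 u v) rfl

lemma second_uv {g : ℝ × ℝ → ℝ} (hg : ContDiff ℝ 2 g) (u v : ℝ) :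
    deriv (fun t => deriv (fun s => g (t, s)) v) u = Hs g (u, v) (1, 0) (0, 1) := by
  have hd : Differentiable ℝ g := hg.differentiable (by norm_num)
  have h1 : (fun t => deriv (fun s => g (t, s)) v) = fun t => fderiv ℝ g (t, v) (0, 1) := by
    funext t
    exact deriv_line hd _ _ (fun s => (t, s)) v (line2 t v) rfl
  rw [h1]
  exact deriv_line2 hg _ _ _ (fun t => (t, v)) u (line1 v u) rfl

lemma Omega2_eq (G : ℝ → ℝ → ℝ) (hG : ContDiff ℝ 2 (fun q : ℝ × ℝ => G q.1 q.2)) :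
    Omega2 G = Om (fun q : ℝ × ℝ => G q.1 q.2) := by
  unfold Omega2 Om sq01
  congr 1
  funext q
  have h1 := second_uu hG q.1 q.2
  have h2 := second_uv hG q.1 q.2
  have h3 := second_vv hG q.1 q.2
  simp only at h1 h2 h3
  rw [h1, h3]
  have e : deriv (fun t => deriv (G t) q.2) q.1 = _ := h2
  rw [e]
  unfold DD
  simp only [sq]

lemma Omega1_eq (f : ℝ → ℝ) (hf : ContDiff ℝ 2 f) :
    Omega1 f = Om (fun q : ℝ × ℝ => f q.1) := by
  have hg : ContDiff ℝ 2 (fun q : ℝ × ℝ => f q.1) := hf.comp contDiff_fst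
  have e : ∀ q : ℝ × ℝ, DD (fun q : ℝ × ℝ => f q.1) (fun q : ℝ × ℝ => f q.1) q =
      (iteratedDeriv 2 f q.1) ^ 2 * 1 := by
    intro q
    have h1 := second_uu hg q.1 q.2
    have h2 := second_uv hg q.1 q.2
    have h3 := second_vv hg q.1 q.2
    simp only at h1 h2 h3
    unfold DD
    have h4 : deriv (fun t => deriv (fun _ : ℝ => f t) q.2) q.1 = 0 := by simp
    have h5 : iteratedDeriv 2 (fun _ : ℝ => f q.1) q.2 = 0 := by simp [iteratedDeriv_succ]
    rw [← h1, ← h2, ← h3, h4, h5]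
    ring
  unfold Omega1 Om sq01
  simp_rw [e]
  rw [Measure.volume_eq_prod, setIntegral_prod_mul (fun u => (iteratedDeriv 2 f u) ^ 2)
    (fun _ => (1:ℝ)), intervalIntegral.integral_of_le zero_le_one, integral_Icc_eq_integral_Ioc]
  simp

lemma Om_nonneg (g : ℝ × ℝ → ℝ) : 0 ≤ Om g :=
  integral_nonneg fun z => DD_nonneg g z

lemma sq01_compact : IsCompact sq01 := isCompact_Icc.prod isCompact_Icc

lemma Hs_sub {g k : ℝ × ℝ → ℝ} (hg : ContDiff ℝ 2 g) (hk : ContDiff ℝ 2 k) (z) :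
    Hs (fun q => g q - k q) z = Hs g z - Hs k z := by
  have h1 : fderiv ℝ (fun q => g q - k q) = fun q => fderiv ℝ g q - fderiv ℝ k q := by
    funext q
    exact fderiv_fun_sub (hg.differentiable (by norm_num) q) (hk.differentiable (by norm_num) q)
  unfold Hs
  rw [h1]
  exact fderiv_fun_sub
    ((hg.fderiv_right (m := 1) (by norm_num)).differentiable (by norm_num) z)
    ((hk.fderiv_right (m := 1) (by norm_num)).differentiable (by norm_num) z)

lemma Hs_add {g k : ℝ × ℝ → ℝ} (hg : ContDiff ℝ 2 g) (hk : ContDiff ℝ 2 k) (z) :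
    Hs (g + k) z = Hs g z + Hs k z := by
  have h1 : fderiv ℝ (g + k) = fderiv ℝ g + fderiv ℝ k := by
    funext q
    exact fderiv_add (hg.differentiable (by norm_num) q) (hk.differentiable (by norm_num) q)
  unfold Hs
  rw [h1]
  exact fderiv_add
    ((hg.fderiv_right (m := 1) (by norm_num)).differentiable (by norm_num) z)
    ((hk.fderiv_right (m := 1) (by norm_num)).differentiable (by norm_num) z)

lemma Hs_smul {g : ℝ × ℝ → ℝ} (hg : ContDiff ℝ 2 g) (r : ℝ) (z) :
    Hs (r • g) z = r • Hs g z := by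
  have h1 : fderiv ℝ (r • g) = r • fderiv ℝ g := by
    funext q
    exact fderiv_const_smul (hg.differentiable (by norm_num) q) r
  unfold Hs
  rw [h1]
  exact fderiv_const_smul
    ((hg.fderiv_right (m := 1) (by norm_num)).differentiable (by norm_num) z) r

lemma Om_sub_le {g k : ℝ × ℝ → ℝ} (hg : ContDiff ℝ 2 g) (hk : ContDiff ℝ 2 k) :
    Om (fun q => g q - k q) ≤ 2 * Om g + 2 * Om k := by
  unfold Om
  rw [← integral_const_mul, ← integral_const_mul, ← integral_add]
  · refine integral_mono ?_ ?_ ?_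
    · exact (DD_cont (hg.sub hk) (hg.sub hk)).continuousOn.integrableOn_compact sq01_compact
    · exact (((DD_cont hg hg).const_mul 2).add
        ((DD_cont hk hk).const_mul 2)).continuousOn.integrableOn_compact sq01_compact
    · intro z
      simp only [DD, Hs_sub hg hk, _root_.sub_apply]
      nlinarith [sq_nonneg (Hs g z (1, 0) (1, 0) + Hs k z (1, 0) (1, 0)),
        sq_nonneg (Hs g z (1, 0) (0, 1) + Hs k z (1, 0) (0, 1)),
        sq_nonneg (Hs g z (0, 1) (0, 1) + Hs k z (0, 1) (0, 1))]
  · exact ((DD_cont hg hg).const_mul 2).continuousOn.integrableOn_compact sq01_compact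
  · exact ((DD_cont hk hk).const_mul 2).continuousOn.integrableOn_compact sq01_compact

end Census

namespace Census

/-- One-dimensional dyadic index at level `k`. -/
def ix (k : ℕ) (u : ℝ) : ℕ := min ⌊2 ^ k * u⌋₊ (2 ^ k - 1)

/-- Two-dimensional dyadic index. -/
def ixx (k : ℕ) (z : ℝ × ℝ) : ℕ × ℕ := (ix k z.1, ix k z.2)

lemma ix_lt (k : ℕ) (u : ℝ) : ix k u < 2 ^ k := by
  have : 0 < 2 ^ k := by positivity
  unfold ix; omega

lemma ix_succ (k : ℕ) (u : ℝ) : ix k u = ix (k + 1) u / 2 := by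
  have h : ⌊2 ^ k * u⌋₊ = ⌊2 ^ (k + 1) * u⌋₊ / 2 := by
    have := Nat.floor_div_natCast (2 ^ (k + 1) * u) 2
    rw [← this]
    congr 1
    push_cast
    rw [pow_succ]; ring
  have : 0 < 2 ^ k := by positivity
  unfold ix
  rw [h, pow_succ]
  omega

lemma ix_nest {k j : ℕ} (hj : j ≤ k) {u w : ℝ} (h : ix k u = ix k w) : ix j u = ix j w := by
  induction k, hj using Nat.le_induction with
  | base => exact h
  | succ k hk ih => exact ih (by rw [ix_succ k u, ix_succ k w, h])

lemma ixx_nest {k j : ℕ} (hj : j ≤ k) {u w : ℝ × ℝ} (h : ixx k u = ixx k w) :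
    ixx j u = ixx j w := by
  simp only [ixx, Prod.mk.injEq] at h ⊢
  exact ⟨ix_nest hj h.1, ix_nest hj h.2⟩

lemma ix_mem (k : ℕ) {u : ℝ} (hu : u ∈ Set.Icc (0:ℝ) 1) :
    u ∈ Set.Icc ((ix k u : ℝ) * (2 ^ k)⁻¹) ((ix k u : ℝ) * (2 ^ k)⁻¹ + (2 ^ k)⁻¹) := by
  have h2 : (0:ℝ) < 2 ^ k := by positivity
  have h0 : 0 ≤ 2 ^ k * u := mul_nonneg h2.le hu.1
  have e1 : (ix k u : ℝ) ≤ 2 ^ k * u :=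
    le_trans (Nat.cast_le.2 (min_le_left _ _)) (Nat.floor_le h0)
  have e2 : 2 ^ k * u ≤ (ix k u : ℝ) + 1 := by
    unfold ix
    rcases le_total ⌊2 ^ k * u⌋₊ (2 ^ k - 1) with h | h
    · rw [min_eq_left h]; exact (Nat.lt_floor_add_one _).le
    · rw [min_eq_right h]
      have : ((2 ^ k - 1 : ℕ) : ℝ) + 1 = 2 ^ k := by
        have : 1 ≤ 2 ^ k := Nat.one_le_two_pow
        push_cast [Nat.cast_sub this]; ring
      rw [this]
      nlinarith [hu.2]
  constructor
  · rw [← div_eq_mul_inv, div_le_iff₀ h2]; linarith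
  · have : (ix k u : ℝ) * (2 ^ k)⁻¹ + (2 ^ k)⁻¹ = ((ix k u : ℝ) + 1) / 2 ^ k := by
      field_simp
    rw [this, le_div_iff₀ h2]; linarith

lemma ix_of_mem (k a : ℕ) (ha : a < 2 ^ k) {u : ℝ}
    (hu : u ∈ Set.Ico ((a : ℝ) * (2 ^ k)⁻¹) ((a : ℝ) * (2 ^ k)⁻¹ + (2 ^ k)⁻¹)) :
    ix k u = a := by
  have h2 : (0:ℝ) < 2 ^ k := by positivity
  have e1 : (a : ℝ) ≤ 2 ^ k * u := by
    have := hu.1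
    rw [← div_eq_mul_inv, div_le_iff₀ h2] at this; linarith
  have e2 : 2 ^ k * u < a + 1 := by
    have := hu.2
    have e : (a : ℝ) * (2 ^ k)⁻¹ + (2 ^ k)⁻¹ = ((a : ℝ) + 1) / 2 ^ k := by field_simp
    rw [e, lt_div_iff₀ h2] at this; linarith
  have : ⌊2 ^ k * u⌋₊ = a := by
    rw [Nat.floor_eq_iff (le_trans (by positivity) e1)]
    exact ⟨e1, e2⟩
  unfold ix
  rw [this]; omega

/-- Half-open dyadic square. -/
def cellO (c : ℕ × ℕ × ℕ) : Set (ℝ × ℝ) :=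
  Set.Ico ((c.2.1 : ℝ) * (2 ^ c.1)⁻¹) ((c.2.1 : ℝ) * (2 ^ c.1)⁻¹ + (2 ^ c.1)⁻¹) ×ˢ
  Set.Ico ((c.2.2 : ℝ) * (2 ^ c.1)⁻¹) ((c.2.2 : ℝ) * (2 ^ c.1)⁻¹ + (2 ^ c.1)⁻¹)

/-- Closed dyadic square. -/
def cellC (c : ℕ × ℕ × ℕ) : Set (ℝ × ℝ) :=
  Set.Icc ((c.2.1 : ℝ) * (2 ^ c.1)⁻¹) ((c.2.1 : ℝ) * (2 ^ c.1)⁻¹ + (2 ^ c.1)⁻¹) ×ˢ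
  Set.Icc ((c.2.2 : ℝ) * (2 ^ c.1)⁻¹) ((c.2.2 : ℝ) * (2 ^ c.1)⁻¹ + (2 ^ c.1)⁻¹)

lemma sum_levels (m : ℕ) (A : ℕ → ℕ) (h1 : ∀ k, A k ≤ 4 ^ k)
    (h2 : ∀ k, A (k + 1) * 4 ^ k ≤ 4 * 16 ^ m) :
    ∑ k ∈ Finset.range (2 * m + 1), A k ≤ 8 * 4 ^ m := by
  have e : 2 * m + 1 = (m + 1) + m := by ring
  rw [e, Finset.sum_range_add]
  have b1 : ∑ k ∈ Finset.range (m + 1), A k ≤ 2 * 4 ^ m := by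
    refine (Finset.sum_le_sum fun k _ => h1 k).trans ?_
    induction m with
    | zero => simp
    | succ m ih =>
      have : ∀ m : ℕ, ∑ k ∈ Finset.range (m + 1), 4 ^ k ≤ 2 * 4 ^ m := by
        intro m
        induction m with
        | zero => simp
        | succ m ih => rw [Finset.sum_range_succ]; rw [pow_succ] at *; omega
      exact this _
  have b2 : ∑ j ∈ Finset.range m, A (m + 1 + j) ≤ 6 * 4 ^ m := by
    have key : ∀ j, (A (m + 1 + j) : ℝ) ≤ 4 * 4 ^ m * (1 / 4) ^ j := by
      intro j
      have h3 := h2 (m + j)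
      have h4 : ((A (m + 1 + j) : ℕ) : ℝ) * 4 ^ (m + j) ≤ 4 * 16 ^ m := by
        have : m + 1 + j = m + j + 1 := by ring
        rw [this]
        exact_mod_cast h3
      have h16 : (16 : ℝ) ^ m = 4 ^ m * 4 ^ m := by rw [← mul_pow]; norm_num
      rw [h16, pow_add] at h4
      have hp : (0:ℝ) < 4 ^ m := by positivity
      have hq : (0:ℝ) < 4 ^ j := by positivity
      rw [one_div, inv_pow, ← div_eq_mul_inv, le_div_iff₀ hq]
      have : 4 ^ m * ((A (m + 1 + j) : ℝ) * 4 ^ j) ≤ 4 ^ m * (4 * 4 ^ m) := by nlinarith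
      exact le_of_mul_le_mul_left this hp
    have geo : ∀ m : ℕ, ∑ j ∈ Finset.range m, ((1:ℝ) / 4) ^ j ≤ 4 / 3 := by
      intro m
      have : ∑ j ∈ Finset.range m, ((1:ℝ) / 4) ^ j = 4 / 3 * (1 - (1 / 4) ^ m) := by
        induction m with
        | zero => simp
        | succ m ih => rw [Finset.sum_range_succ, ih, pow_succ]; ring
      rw [this]
      have : (0:ℝ) ≤ (1 / 4) ^ m := by positivity
      linarith
    have : (∑ j ∈ Finset.range m, (A (m + 1 + j) : ℝ)) ≤ 6 * 4 ^ m := by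
      refine (Finset.sum_le_sum fun j _ => key j).trans ?_
      rw [← Finset.mul_sum]
      have hp : (0:ℝ) < 4 ^ m := by positivity
      nlinarith [geo m]
    exact_mod_cast this
  omega

/-- Adaptive dyadic partition. -/
lemma partition_exists {n : ℕ} (hn : 1 ≤ n) (z : Fin n → ℝ × ℝ) (hz : ∀ i, z i ∈ sq01) (m : ℕ) :
    ∃ (cells : Finset (ℕ × ℕ × ℕ)) (c : Fin n → ℕ × ℕ × ℕ),
      (∀ i, c i ∈ cells) ∧ cells.card ≤ 8 * 4 ^ m ∧ (∀ i, z i ∈ cellC (c i)) ∧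
      (∀ d ∈ cells, (Finset.univ.filter fun i => c i = d).card * 16 ^ m ≤ n * 4 ^ d.1) ∧
      (∀ d ∈ cells, cellO d ⊆ sq01) ∧
      (cells : Set (ℕ × ℕ × ℕ)).PairwiseDisjoint cellO := by
  classical
  let cnt : ℕ → ℕ × ℕ → ℕ := fun k ab => (Finset.univ.filter fun i => ixx k (z i) = ab).card
  let good : ℕ → ℝ × ℝ → Prop := fun k y => cnt k (ixx k y) * 16 ^ m ≤ n * 4 ^ k
  have hcnt : ∀ k ab, cnt k ab ≤ n := fun k ab => by
    have := Finset.card_le_univ (Finset.univ.filter fun i => ixx k (z i) = ab)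
    simpa using this
  have hgood : ∀ y, good (2 * m) y := by
    intro y
    have : (4:ℕ) ^ (2 * m) = 16 ^ m := by rw [pow_mul]; norm_num
    simp only [good, this]
    exact Nat.mul_le_mul_right _ (hcnt _ _)
  have hex : ∀ y, ∃ k, good k y := fun y => ⟨_, hgood y⟩
  let lev : ℝ × ℝ → ℕ := fun y => Nat.find (hex y)
  have hlev : ∀ y, lev y ≤ 2 * m := fun y => Nat.find_min' _ (hgood y)
  let leaf : ℝ × ℝ → ℕ × ℕ × ℕ := fun y => (lev y, ixx (lev y) y)
  have hleaf : ∀ i y, y ∈ cellO (leaf (z i)) → leaf y = leaf (z i) := by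
    intro i y hy
    set k := lev (z i)
    have e1 : ixx k y = ixx k (z i) := by
      have h1 := ix_of_mem k _ (ix_lt k (z i).1) hy.1
      have h2 := ix_of_mem k _ (ix_lt k (z i).2) hy.2
      simp only [ixx, h1, h2]
    have e2 : lev y = k := by
      rw [Nat.find_eq_iff]
      constructor
      · have := Nat.find_spec (hex (z i))
        change cnt k (ixx k y) * 16 ^ m ≤ n * 4 ^ k
        rw [e1]; exact this
      · intro j hj
        have := Nat.find_min (hex (z i)) hj
        change ¬ cnt j (ixx j y) * 16 ^ m ≤ n * 4 ^ j
        rw [ixx_nest hj.le e1]; exact this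
    simp only [leaf, e2, e1]
    rfl
  let Lk : ℕ → Finset (ℕ × ℕ) := fun k =>
    (Finset.univ.filter fun i => lev (z i) = k).image fun i => ixx k (z i)
  refine ⟨Finset.univ.image fun i => leaf (z i), fun i => leaf (z i), ?_, ?_, ?_, ?_, ?_, ?_⟩
  · intro i; exact Finset.mem_image_of_mem _ (Finset.mem_univ i)
  · have hsub : (Finset.univ.image fun i => leaf (z i)) ⊆
        (Finset.range (2 * m + 1)).biUnion fun k => (Lk k).image fun ab => (k, ab) := by
      intro d hd
      obtain ⟨i, -, rfl⟩ := Finset.mem_image.1 hd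
      refine Finset.mem_biUnion.2 ⟨lev (z i), Finset.mem_range.2 (by have := hlev (z i); omega), ?_⟩
      refine Finset.mem_image.2 ⟨ixx (lev (z i)) (z i), ?_, rfl⟩
      exact Finset.mem_image.2 ⟨i, by simp, rfl⟩
    refine (Finset.card_le_card hsub).trans (Finset.card_biUnion_le.trans ?_)
    refine (Finset.sum_le_sum fun k _ => Finset.card_image_le).trans ?_
    refine sum_levels m (fun k => (Lk k).card) ?_ ?_
    · intro k
      have : Lk k ⊆ Finset.range (2 ^ k) ×ˢ Finset.range (2 ^ k) := by
        intro ab hab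
        obtain ⟨i, -, rfl⟩ := Finset.mem_image.1 hab
        simp [ixx, ix_lt]
      refine (Finset.card_le_card this).trans (le_of_eq ?_)
      rw [Finset.card_product, Finset.card_range, ← mul_pow]; norm_num
    · intro k
      let Bad : Finset (ℕ × ℕ) := (Finset.univ.image fun i => ixx k (z i)).filter
        fun ab => n * 4 ^ k < cnt k ab * 16 ^ m
      have hB1 : Bad.card * 4 ^ k ≤ 16 ^ m := by
        have h1 : ∑ ab ∈ Bad, n * 4 ^ k ≤ ∑ ab ∈ Bad, cnt k ab * 16 ^ m :=
          Finset.sum_le_sum fun ab hab => (Finset.mem_filter.1 hab).2.le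
        have h2 : ∑ ab ∈ Bad, cnt k ab ≤ n := by
          have h3 : ∑ ab ∈ Finset.univ.image (fun i => ixx k (z i)), cnt k ab = n := by
            have := Finset.card_eq_sum_card_image (fun i => ixx k (z i))
              (Finset.univ : Finset (Fin n))
            simpa using this.symm
          rw [← h3]
          exact Finset.sum_le_sum_of_subset (Finset.filter_subset _ _)
        rw [Finset.sum_const, ← Finset.sum_mul, smul_eq_mul] at h1
        have h4 : n * (Bad.card * 4 ^ k) ≤ n * 16 ^ m := by
          calc _ = Bad.card * (n * 4 ^ k) := by ring
            _ ≤ _ := h1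
            _ ≤ _ := Nat.mul_le_mul_right _ h2
        exact Nat.le_of_mul_le_mul_left h4 (by omega)
      have hB2 : Lk (k + 1) ⊆ (Bad ×ˢ (Finset.range 2 ×ˢ Finset.range 2)).image
          fun q => (2 * q.1.1 + q.2.1, 2 * q.1.2 + q.2.2) := by
        intro ab hab
        obtain ⟨i, hi, rfl⟩ := Finset.mem_image.1 hab
        have hi : lev (z i) = k + 1 := (Finset.mem_filter.1 hi).2
        have hbad : ¬ good k (z i) := Nat.find_min (hex (z i)) (by
          change k < lev (z i); omega)
        refine Finset.mem_image.2 ⟨(ixx k (z i), (ix (k + 1) (z i).1 % 2, ix (k + 1) (z i).2 % 2)),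
          ?_, ?_⟩
        · refine Finset.mem_product.2 ⟨Finset.mem_filter.2 ⟨?_, not_le.1 hbad⟩, ?_⟩
          · exact Finset.mem_image_of_mem _ (Finset.mem_univ i)
          · refine Finset.mem_product.2 ⟨?_, ?_⟩ <;> simp only [Finset.mem_range] <;> omega
        · have a1 := ix_succ k (z i).1
          have a2 := ix_succ k (z i).2
          simp only [ixx, Prod.mk.injEq]
          omega
      have hB3 : (Lk (k + 1)).card ≤ 4 * Bad.card := by
        refine (Finset.card_le_card hB2).trans (Finset.card_image_le.trans ?_)
        simp only [Finset.card_product, Finset.card_range]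
        omega
      calc (Lk (k + 1)).card * 4 ^ k ≤ 4 * Bad.card * 4 ^ k := Nat.mul_le_mul_right _ hB3
        _ = 4 * (Bad.card * 4 ^ k) := by ring
        _ ≤ _ := by omega
  · intro i
    exact ⟨ix_mem _ (hz i).1, ix_mem _ (hz i).2⟩
  · intro d hd
    obtain ⟨i, -, rfl⟩ := Finset.mem_image.1 hd
    have h1 := Nat.find_spec (hex (z i))
    refine le_trans (Nat.mul_le_mul_right _ (Finset.card_le_card ?_)) h1
    intro j hj
    have hj : leaf (z j) = leaf (z i) := (Finset.mem_filter.1 hj).2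
    refine Finset.mem_filter.2 ⟨Finset.mem_univ _, ?_⟩
    have h2 : lev (z j) = lev (z i) := congrArg Prod.fst hj
    have h3 : ixx (lev (z j)) (z j) = ixx (lev (z i)) (z i) := congrArg Prod.snd hj
    rw [h2] at h3
    exact h3
  · intro d hd
    obtain ⟨i, -, rfl⟩ := Finset.mem_image.1 hd
    have aux : ∀ (k a : ℕ), a < 2 ^ k →
        Set.Ico ((a : ℝ) * (2 ^ k)⁻¹) ((a : ℝ) * (2 ^ k)⁻¹ + (2 ^ k)⁻¹) ⊆ Set.Icc (0:ℝ) 1 := by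
      intro k a ha u hu
      have h2 : (0:ℝ) < 2 ^ k := by positivity
      refine ⟨le_trans (by positivity) hu.1, hu.2.le.trans ?_⟩
      have e : (a : ℝ) * (2 ^ k)⁻¹ + (2 ^ k)⁻¹ = ((a : ℝ) + 1) / 2 ^ k := by field_simp
      rw [e, div_le_one h2]
      exact_mod_cast ha
    exact Set.prod_mono (aux _ _ (ix_lt _ _)) (aux _ _ (ix_lt _ _))
  · intro d hd e he hde
    rw [Finset.mem_coe] at hd he
    obtain ⟨i, -, rfl⟩ := Finset.mem_image.1 hd
    obtain ⟨j, -, rfl⟩ := Finset.mem_image.1 he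
    refine Set.disjoint_left.2 fun y hy1 hy2 => hde ?_
    rw [← hleaf i y hy1, ← hleaf j y hy2]

end Census

namespace Census
open Matrix

/-- The space of twice continuously differentiable functions of two variables. -/
def C2 : Submodule ℝ (ℝ × ℝ → ℝ) where
  carrier := {g | ContDiff ℝ 2 g}
  add_mem' := fun {a b} ha hb => by
    rw [Set.mem_ofPred_eq] at *; exact ContDiff.add ha hb
  zero_mem' := by rw [Set.mem_ofPred_eq]; exact contDiff_const
  smul_mem' := fun c g hg => by rw [Set.mem_ofPred_eq] at *; exact ContDiff.const_smul c hg

lemma mem_C2 {g : ℝ × ℝ → ℝ} : g ∈ C2 ↔ ContDiff ℝ 2 g := by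
  change g ∈ {g | ContDiff ℝ 2 g} ↔ _
  rw [Set.mem_ofPred_eq]

lemma C2_prop (g : C2) : ContDiff ℝ 2 (g : ℝ × ℝ → ℝ) := mem_C2.1 g.2

lemma cellC_compact (d : ℕ × ℕ × ℕ) : IsCompact (cellC d) := isCompact_Icc.prod isCompact_Icc

lemma cellO_ae_cellC (d : ℕ × ℕ × ℕ) : cellO d =ᵐ[volume] cellC d :=
  Measure.set_prod_ae_eq Ico_ae_eq_Icc Ico_ae_eq_Icc

lemma cellO_meas (d : ℕ × ℕ × ℕ) : MeasurableSet (cellO d) := measurableSet_Ico.prod measurableSet_Ico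

/-- Averaged Taylor integrand is continuous. -/
lemma tay_cont {g : ℝ × ℝ → ℝ} (hg : ContDiff ℝ 2 g) (x : ℝ × ℝ) :
    Continuous fun y => g y - fderiv ℝ g y (y - x) := by
  have := fd_cont hg
  have := hg.continuous
  fun_prop

/-- Averaged Taylor polynomial on a cell. -/
def Tay (d : ℕ × ℕ × ℕ) (x : ℝ × ℝ) (g : ℝ × ℝ → ℝ) : ℝ :=
  ((((2:ℝ) ^ d.1)⁻¹) ^ 2)⁻¹ * ∫ y in cellC d, (g y - fderiv ℝ g y (y - x))

lemma Tay_affine (d : ℕ × ℕ × ℕ) {g : ℝ × ℝ → ℝ} (hg : ContDiff ℝ 2 g) :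
    ∃ A B C : ℝ, ∀ x : ℝ × ℝ, Tay d x g = A + B * x.1 + C * x.2 := by
  refine ⟨Tay d 0 g, ((((2:ℝ) ^ d.1)⁻¹) ^ 2)⁻¹ * ∫ y in cellC d, fderiv ℝ g y (1, 0),
    ((((2:ℝ) ^ d.1)⁻¹) ^ 2)⁻¹ * ∫ y in cellC d, fderiv ℝ g y (0, 1), fun x => ?_⟩
  have hc := fd_cont hg
  have i0 : IntegrableOn (fun y => g y - fderiv ℝ g y (y - 0)) (cellC d) :=
    (tay_cont hg 0).continuousOn.integrableOn_compact (cellC_compact d)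
  have i1 : IntegrableOn (fun y => fderiv ℝ g y (1, 0)) (cellC d) :=
    (show Continuous fun y => fderiv ℝ g y (1, 0) by fun_prop).continuousOn.integrableOn_compact
      (cellC_compact d)
  have i2 : IntegrableOn (fun y => fderiv ℝ g y (0, 1)) (cellC d) :=
    (show Continuous fun y => fderiv ℝ g y (0, 1) by fun_prop).continuousOn.integrableOn_compact
      (cellC_compact d)
  have e : (fun y => g y - fderiv ℝ g y (y - x)) = fun y =>
      ((g y - fderiv ℝ g y (y - 0)) + x.1 * fderiv ℝ g y (1, 0)) + x.2 * fderiv ℝ g y (0, 1) := by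
    funext y
    have hx : x = x.1 • ((1, 0) : ℝ × ℝ) + x.2 • ((0, 1) : ℝ × ℝ) := by ext <;> simp
    have : fderiv ℝ g y x = x.1 * fderiv ℝ g y (1, 0) + x.2 * fderiv ℝ g y (0, 1) := by
      conv_lhs => rw [hx]
      simp only [map_add, map_smul, smul_eq_mul]
    rw [map_sub, this, sub_zero]; ring
  unfold Tay
  have i3 : IntegrableOn (fun y => (g y - fderiv ℝ g y (y - 0)) + x.1 * fderiv ℝ g y (1, 0))
      (cellC d) := i0.add (i1.const_mul _)
  rw [e, integral_add i3 (i2.const_mul _), integral_add i0 (i1.const_mul _), integral_const_mul, integral_const_mul]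
  ring

lemma Tay_add (d : ℕ × ℕ × ℕ) (x) {g k : ℝ × ℝ → ℝ} (hg : ContDiff ℝ 2 g) (hk : ContDiff ℝ 2 k) :
    Tay d x (g + k) = Tay d x g + Tay d x k := by
  unfold Tay
  rw [← mul_add, ← integral_add ((tay_cont hg x).continuousOn.integrableOn_compact (cellC_compact d))
    ((tay_cont hk x).continuousOn.integrableOn_compact (cellC_compact d))]
  congr 2
  funext y
  rw [fderiv_add (hg.differentiable (by norm_num) y) (hk.differentiable (by norm_num) y)]
  simp only [Pi.add_apply, _root_.add_apply]
  ring

lemma Tay_smul (d : ℕ × ℕ × ℕ) (x) {g : ℝ × ℝ → ℝ} (hg : ContDiff ℝ 2 g) (r : ℝ) :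
    Tay d x (r • g) = r * Tay d x g := by
  unfold Tay
  have : ∀ y, (r • g) y - fderiv ℝ (r • g) y (y - x) = r * (g y - fderiv ℝ g y (y - x)) := by
    intro y
    rw [fderiv_const_smul (hg.differentiable (by norm_num) y) r]
    simp only [Pi.smul_apply, _root_.smul_apply, smul_eq_mul]
    ring
  simp only [this]
  rw [integral_const_mul]
  ring

/-- The remainder functional at `x` w.r.t. the cell `d`. -/
def Rem (d : ℕ × ℕ × ℕ) (x : ℝ × ℝ) : C2 →ₗ[ℝ] ℝ where
  toFun g := (g : ℝ × ℝ → ℝ) x - Tay d x g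
  map_add' g k := by
    have := Tay_add d x (C2_prop g) (C2_prop k)
    simp only [Submodule.coe_add, this, Pi.add_apply]; ring
  map_smul' r g := by
    have := Tay_smul d x (C2_prop g) r
    simp only [Submodule.coe_smul, this, Pi.smul_apply, smul_eq_mul, RingHom.id_apply]; ring

lemma Rem_sq (d : ℕ × ℕ × ℕ) {x : ℝ × ℝ} (hx : x ∈ cellC d) (g : C2) :
    (Rem d x g) ^ 2 ≤ 6 * (4 ^ d.1)⁻¹ * ∫ y in cellO d, DD g g y := by
  have h := approx_square (C2_prop g) (h := ((2:ℝ) ^ d.1)⁻¹) (by positivity) hx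
  have e : (((2:ℝ) ^ d.1)⁻¹) ^ 2 = (4 ^ d.1)⁻¹ := by
    rw [inv_pow, ← pow_mul, mul_comm, pow_mul]; norm_num
  rw [setIntegral_congr_set (cellO_ae_cellC d)]
  rw [e] at h
  simp only [Rem, Tay, e, LinearMap.coe_mk, AddHom.coe_mk]
  exact h

lemma DD_int (g k : C2) (s : Set (ℝ × ℝ)) (hs : s ⊆ sq01) : IntegrableOn (DD g k) s :=
  ((DD_cont (C2_prop g) (C2_prop k)).continuousOn.integrableOn_compact sq01_compact).mono_set hs

lemma pair_core {n : ℕ} (hn : 1 ≤ n) (z : Fin n → ℝ × ℝ) (hz : ∀ i, z i ∈ sq01) (m : ℕ) :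
    ∃ (V : Submodule ℝ (Fin n → ℝ)) (M : Matrix (Fin n) (Fin n) ℝ),
      Module.finrank ℝ V ≤ 24 * 4 ^ m ∧ M.PosSemidef ∧ M.trace ≤ 8 * 4 ^ m ∧
      (∀ a, a ⬝ᵥ M *ᵥ a ≤ a ⬝ᵥ a) ∧
      ∀ g : ℝ × ℝ → ℝ, ContDiff ℝ 2 g → ∃ r : Fin n → ℝ, (fun i => g (z i) - r i) ∈ V ∧
        ∑ i, r i ^ 2 ≤ 6 * n / 16 ^ m * Om g ∧
        ∀ a : Fin n → ℝ, (∑ i, a i * r i) ^ 2 ≤ 6 * n / 16 ^ m * (a ⬝ᵥ M *ᵥ a) * Om g := by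
  classical
  obtain ⟨cells, c, hc, hcard, hzc, hcnt, hsub, hdisj⟩ := partition_exists hn z hz m
  have hn0 : (0:ℝ) < n := by exact_mod_cast hn
  have h16 : (0:ℝ) < 16 ^ m := by positivity
  have hcnt' : ∀ d ∈ cells, ((Finset.univ.filter fun i => c i = d).card : ℝ) * (4 ^ d.1)⁻¹ ≤
      n / 16 ^ m := by
    intro d hd
    have h4 : (0:ℝ) < 4 ^ d.1 := by positivity
    have : ((Finset.univ.filter fun i => c i = d).card : ℝ) * 16 ^ m ≤ n * 4 ^ d.1 := by
      exact_mod_cast hcnt d hd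
    rw [← div_eq_mul_inv, div_le_div_iff₀ h4 h16]; exact this
  let L : Fin n → (C2 →ₗ[ℝ] ℝ) := fun i => Rem (c i) (z i)
  let b : Fin n → ℝ := fun i => 6 * (4 ^ (c i).1)⁻¹
  let B : C2 → C2 → ℝ := fun g k => ∫ q in sq01, DD g k q
  have hcell : ∀ d ∈ cells, ∀ g : C2, ∫ y in cellO d, DD g g y ≤ B g g := by
    intro d hd g
    exact setIntegral_mono_set (DD_int g g _ le_rfl) (ae_of_all _ (DD_nonneg _))
      (hsub d hd).eventuallyLE
  have hBnn : ∀ g, 0 ≤ B g g := fun g => integral_nonneg (DD_nonneg _)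
  have hb : ∀ i g, (L i g) ^ 2 ≤ b i * B g g := fun i g =>
    (Rem_sq (c i) (hzc i) g).trans
      (mul_le_mul_of_nonneg_left (hcell _ (hc i) g) (by positivity))
  have hfib : ∀ F : ℕ × ℕ × ℕ → ℝ, ∑ i, F (c i) =
      ∑ d ∈ cells, ((Finset.univ.filter fun i => c i = d).card : ℝ) * F d := by
    intro F
    rw [← Finset.sum_fiberwise_of_maps_to (s := Finset.univ) (t := cells) (g := c)
      (fun i _ => hc i)]
    refine Finset.sum_congr rfl fun d _ => ?_
    rw [Finset.sum_congr rfl (g := fun _ => F d)]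
    · simp
    · intro i hi; rw [(Finset.mem_filter.1 hi).2]
  have hop : ∀ g, ∑ i, (L i g) ^ 2 ≤ (6 * n / 16 ^ m) * B g g := by
    intro g
    calc ∑ i, (L i g) ^ 2 ≤ ∑ i, (fun d : ℕ × ℕ × ℕ => 6 * (4 ^ d.1)⁻¹ * ∫ y in cellO d, DD g g y) (c i) :=
          Finset.sum_le_sum fun i _ => Rem_sq (c i) (hzc i) g
      _ = ∑ d ∈ cells, 6 * (((Finset.univ.filter fun i => c i = d).card : ℝ) * (4 ^ d.1)⁻¹)
            * ∫ y in cellO d, DD g g y := by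
          refine (hfib (fun d : ℕ × ℕ × ℕ => 6 * ((4:ℝ) ^ d.1)⁻¹ * ∫ y in cellO d, DD g g y)).trans ?_
          refine Finset.sum_congr rfl fun d _ => by ring
      _ ≤ ∑ d ∈ cells, 6 * (n / 16 ^ m) * ∫ y in cellO d, DD g g y := by
          refine Finset.sum_le_sum fun d hd => ?_
          refine mul_le_mul_of_nonneg_right ?_ (integral_nonneg (DD_nonneg _))
          have := hcnt' d hd
          linarith
      _ = 6 * (n / 16 ^ m) * ∫ y in ⋃ d ∈ cells, cellO d, DD g g y := by
          rw [integral_biUnion_finset cells (fun d _ => cellO_meas d) hdisj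
            (fun d hd => DD_int g g _ (hsub d hd)), Finset.mul_sum]
      _ ≤ 6 * (n / 16 ^ m) * B g g := by
          refine mul_le_mul_of_nonneg_left ?_ (by positivity)
          exact setIntegral_mono_set (DD_int g g _ le_rfl) (ae_of_all _ (DD_nonneg _))
            (Set.iUnion₂_subset hsub).eventuallyLE
      _ = _ := by ring
  have hbsum : ∑ i, b i ≤ 6 * n / 16 ^ m * (8 * 4 ^ m) := by
    calc ∑ i, b i = ∑ i, (fun d : ℕ × ℕ × ℕ => 6 * ((4:ℝ) ^ d.1)⁻¹) (c i) := rfl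
      _ = ∑ d ∈ cells, 6 * (((Finset.univ.filter fun i => c i = d).card : ℝ) * (4 ^ d.1)⁻¹) := by
          refine (hfib (fun d : ℕ × ℕ × ℕ => 6 * ((4:ℝ) ^ d.1)⁻¹)).trans ?_
          refine Finset.sum_congr rfl fun d _ => by ring
      _ ≤ ∑ d ∈ cells, 6 * (n / 16 ^ m : ℝ) := by
          refine Finset.sum_le_sum fun d hd => ?_
          have := hcnt' d hd
          linarith
      _ = cells.card * (6 * (n / 16 ^ m : ℝ)) := by simp
      _ ≤ (8 * 4 ^ m) * (6 * (n / 16 ^ m : ℝ)) := by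
          refine mul_le_mul_of_nonneg_right ?_ (by positivity)
          exact_mod_cast hcard
      _ = _ := by ring
  have ht : (0:ℝ) < 6 * n / 16 ^ m := by positivity
  obtain ⟨M, hM, htr, hMop, hML⟩ := riesz_gram B
    (fun g k => by
      refine integral_congr_ae (ae_of_all _ fun q => ?_)
      simp only [DD]; ring)
    hBnn
    (fun g h k => by
      simp only [B]
      rw [← integral_add (DD_int g k _ le_rfl) (DD_int h k _ le_rfl)]
      refine integral_congr_ae (ae_of_all _ fun q => ?_)
      have := Hs_add (C2_prop g) (C2_prop h) q
      simp only [DD, Submodule.coe_add, this, _root_.add_apply]; ring)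
    (fun g h r => by
      simp only [B]
      rw [← integral_const_mul]
      refine integral_congr_ae (ae_of_all _ fun q => ?_)
      have := Hs_smul (C2_prop g) r q
      simp only [DD, Submodule.coe_smul, this, _root_.smul_apply, smul_eq_mul]; ring)
    L b (fun i => by positivity) _ ht.le hb hop
  set t : ℝ := 6 * n / 16 ^ m with htdef
  let vec : cells × Fin 3 → (Fin n → ℝ) := fun q i =>
    if c i = q.1 then ![1, (z i).1, (z i).2] q.2 else 0
  have hform : ∀ a : Fin n → ℝ, a ⬝ᵥ (t⁻¹ • M) *ᵥ a = t⁻¹ * (a ⬝ᵥ M *ᵥ a) := by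
    intro a
    rw [smul_mulVec, dotProduct_smul, smul_eq_mul]
  refine ⟨Submodule.span ℝ (Set.range vec), t⁻¹ • M, ?_, ?_, ?_, ?_, ?_⟩
  · refine (finrank_range_le_card vec).trans ?_
    simp only [Fintype.card_prod, Fintype.card_coe, Fintype.card_fin]
    omega
  · exact hM.smul (by positivity)
  · rw [trace_smul, smul_eq_mul, inv_mul_le_iff₀ ht]
    exact htr.trans hbsum
  · intro a
    rw [hform, inv_mul_le_iff₀ ht]
    exact hMop a
  · intro g hg
    refine ⟨fun i => L i ⟨g, mem_C2.2 hg⟩, ?_, hop ⟨g, mem_C2.2 hg⟩, fun a => ?_⟩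
    · choose A A1 A2 hA using fun d => Tay_affine d hg
      have : (fun i => g (z i) - L i ⟨g, mem_C2.2 hg⟩) = ∑ d : cells,
          (A d • vec (d, 0) + A1 d • vec (d, 1) + A2 d • vec (d, 2)) := by
        funext i
        rw [Finset.sum_apply, Finset.sum_eq_single ⟨c i, hc i⟩]
        · simp only [L, Rem, LinearMap.coe_mk, AddHom.coe_mk, hA, vec, Pi.add_apply, Pi.smul_apply,
            smul_eq_mul, if_true]
          simp
        · intro d _ hd
          have : ¬ c i = d := fun h => hd (Subtype.ext h.symm)
          simp [vec, this]
        · intro h; exact absurd (Finset.mem_univ _) h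
      rw [this]
      have hv : ∀ q, vec q ∈ Submodule.span ℝ (Set.range vec) := fun q =>
        Submodule.subset_span ⟨q, rfl⟩
      refine Submodule.sum_mem _ fun d _ => ?_
      exact Submodule.add_mem _ (Submodule.add_mem _ (Submodule.smul_mem _ _ (hv _))
        (Submodule.smul_mem _ _ (hv _))) (Submodule.smul_mem _ _ (hv _))
    · refine (hML a ⟨g, mem_C2.2 hg⟩).trans (le_of_eq ?_)
      rw [hform, ← mul_assoc, mul_inv_cancel₀ ht.ne', one_mul]
      rfl

end Census

namespace Census
open Matrix

lemma proj_exists {n : ℕ} (V : Submodule ℝ (Fin n → ℝ)) (D : ℕ) (hD : Module.finrank ℝ V ≤ D) :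
    ∃ M : Matrix (Fin n) (Fin n) ℝ, M.PosSemidef ∧ M.trace ≤ D ∧
      (∀ a, a ⬝ᵥ M *ᵥ a ≤ a ⬝ᵥ a) ∧
      ∀ (a : Fin n → ℝ), ∀ v ∈ V, (∑ i, a i * v i) ^ 2 ≤ (a ⬝ᵥ M *ᵥ a) * ∑ i, v i ^ 2 := by
  let V' : Submodule ℝ (EuclideanSpace ℝ (Fin n)) :=
    V.map ((WithLp.linearEquiv 2 ℝ (Fin n → ℝ)).symm : (Fin n → ℝ) →ₗ[ℝ] EuclideanSpace ℝ (Fin n))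
  have hfr : Module.finrank ℝ V' = Module.finrank ℝ V := LinearEquiv.finrank_map_eq _ _
  let e := stdOrthonormalBasis ℝ V'
  have hon : Orthonormal ℝ (fun k => (e k : EuclideanSpace ℝ (Fin n))) :=
    e.orthonormal.comp_linearIsometry V'.subtypeₗᵢ
  let E : Matrix (Fin n) (Fin (Module.finrank ℝ V')) ℝ :=
    Matrix.of fun i k => (e k : EuclideanSpace ℝ (Fin n)) i
  have hE : ∀ i k, E i k = (e k : EuclideanSpace ℝ (Fin n)) i := fun _ _ => rfl
  have hin : ∀ (a : Fin n → ℝ) k, inner ℝ (e k : EuclideanSpace ℝ (Fin n)) (WithLp.toLp 2 a)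
      = ∑ i, a i * (e k : EuclideanSpace ℝ (Fin n)) i := by
    intro a k
    simp [PiLp.inner_apply]
  have hnorm : ∀ (a : Fin n → ℝ), ‖(WithLp.toLp 2 a : EuclideanSpace ℝ (Fin n))‖ ^ 2
      = ∑ i, a i ^ 2 := by
    intro a
    simp [EuclideanSpace.norm_sq_eq]
  have hform : ∀ a : Fin n → ℝ, a ⬝ᵥ (E * Eᵀ) *ᵥ a =
      ∑ k, (∑ i, a i * (e k : EuclideanSpace ℝ (Fin n)) i) ^ 2 := by
    intro a
    rw [← mulVec_mulVec, dotProduct_mulVec, ← mulVec_transpose]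
    simp only [dotProduct, mulVec, transpose_apply, hE, sq]
    refine Finset.sum_congr rfl fun k _ => ?_
    simp only [mul_comm]
  have hbes : ∀ a : Fin n → ℝ, ∑ k, (∑ i, a i * (e k : EuclideanSpace ℝ (Fin n)) i) ^ 2
      ≤ ∑ i, a i ^ 2 := by
    intro a
    have := hon.sum_inner_products_le (x := WithLp.toLp 2 a) (s := Finset.univ)
    simp only [hin, hnorm, Real.norm_eq_abs, sq_abs] at this
    exact this
  refine ⟨E * Eᵀ, ?_, ?_, ?_, ?_⟩
  · have := posSemidef_self_mul_conjTranspose E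
    rwa [conjTranspose_eq_transpose_of_trivial] at this
  · have : (E * Eᵀ).trace = Module.finrank ℝ V' := by
      rw [trace_mul_comm, trace]
      have : ∀ k, (Eᵀ * E).diag k = 1 := by
        intro k
        have h1 := hon.1 k
        have h2 := EuclideanSpace.norm_sq_eq (e k : EuclideanSpace ℝ (Fin n))
        rw [h1] at h2
        simp only [diag_apply, mul_apply, transpose_apply, hE]
        simp only [Real.norm_eq_abs, sq_abs] at h2
        simp only [← sq]; linarith
      rw [Finset.sum_congr rfl fun k _ => this k]
      simp
    rw [this, hfr]; exact_mod_cast hD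
  · intro a
    rw [hform]
    refine (hbes a).trans (le_of_eq ?_)
    simp [dotProduct, sq]
  · intro a v hv
    have hv' : (WithLp.toLp 2 v : EuclideanSpace ℝ (Fin n)) ∈ V' := ⟨v, hv, rfl⟩
    have hrep := e.sum_repr' ⟨_, hv'⟩
    have hcoord : ∀ i, v i = ∑ k, (∑ i, v i * (e k : EuclideanSpace ℝ (Fin n)) i) *
        (e k : EuclideanSpace ℝ (Fin n)) i := by
      intro i
      have h3 := congrArg (fun w : V' => (w : EuclideanSpace ℝ (Fin n)) i) hrep
      simp only [Submodule.coe_inner, hin, Submodule.coe_sum, Submodule.coe_smul] at h3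
      rw [← h3]
      simp
    have : ∑ i, a i * v i = ∑ k, (∑ i, a i * (e k : EuclideanSpace ℝ (Fin n)) i) *
        (∑ i, v i * (e k : EuclideanSpace ℝ (Fin n)) i) := by
      calc ∑ i, a i * v i = ∑ i, ∑ k, a i * ((∑ i, v i * (e k : EuclideanSpace ℝ (Fin n)) i) *
            (e k : EuclideanSpace ℝ (Fin n)) i) := by
            refine Finset.sum_congr rfl fun i _ => ?_
            rw [← Finset.mul_sum, ← hcoord i]
        _ = _ := by
            rw [Finset.sum_comm]
            refine Finset.sum_congr rfl fun k _ => ?_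
            rw [Finset.sum_mul]
            refine Finset.sum_congr rfl fun i _ => by ring
    rw [this, hform]
    refine (Finset.sum_mul_sq_le_sq_mul_sq _ _ _).trans ?_
    exact mul_le_mul_of_nonneg_left (hbes v) (Finset.sum_nonneg fun _ _ => sq_nonneg _)

end Census

namespace Census
open Matrix

/-- Components of a representation, indexed by all pairs. -/
def comp {p : ℕ} (R : AddRep p) (s : Fin p × Fin p) : ℝ × ℝ → ℝ :=
  if s.1 = s.2 then fun q => R.main s.1 q.1
  else if s.1 < s.2 then fun q => R.inter s.1 s.2 q.1 q.2 else fun _ => 0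

lemma comp_smooth {p : ℕ} (R : AddRep p) (s : Fin p × Fin p) : ContDiff ℝ 2 (comp R s) := by
  unfold comp
  split_ifs
  · exact (R.smooth_main s.1).comp contDiff_fst
  · exact R.smooth_inter _ _
  · exact contDiff_const

lemma sum_pairs {p : ℕ} (A : Fin p → ℝ) (B : Fin p → Fin p → ℝ) (F : Fin p × Fin p → ℝ)
    (h1 : ∀ j, F (j, j) = A j) (h2 : ∀ j k, j < k → F (j, k) = B j k)
    (h3 : ∀ j k, k < j → F (j, k) = 0) :
    ((∑ j, A j) + ∑ j, ∑ k, if j < k then B j k else 0) = ∑ s, F s := by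
  rw [Fintype.sum_prod_type, ← Finset.sum_add_distrib]
  refine Finset.sum_congr rfl fun j _ => ?_
  have : ∀ k, F (j, k) = (if k = j then A j else 0) + if j < k then B j k else 0 := by
    intro k
    rcases lt_trichotomy j k with h | h | h
    · rw [h2 _ _ h, if_neg h.ne', if_pos h, zero_add]
    · subst h; simp [h1]
    · rw [h3 _ _ h, if_neg h.ne, if_neg h.not_gt, zero_add]
  simp only [this, Finset.sum_add_distrib, Finset.sum_ite_eq', Finset.mem_univ, if_true]

lemma comp_diag {p : ℕ} (R : AddRep p) (j) : comp R (j, j) = fun q => R.main j q.1 := by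
  simp [comp]

lemma comp_lt {p : ℕ} (R : AddRep p) (j k) (h : j < k) :
    comp R (j, k) = fun q => R.inter j k q.1 q.2 := by
  simp [comp, h, h.ne]

lemma comp_gt {p : ℕ} (R : AddRep p) (j k) (h : k < j) :
    comp R (j, k) = fun _ => 0 := by
  simp [comp, h.not_gt, h.ne']

lemma toFun_eq {p : ℕ} (R : AddRep p) (x : Fin p → ℝ) :
    R.toFun x = ∑ s, comp R s (x s.1, x s.2) := by
  unfold AddRep.toFun
  apply sum_pairs
  · intro j; simp [comp_diag]
  · intro j k h; simp [comp_lt R j k h]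
  · intro j k h; simp [comp_gt R j k h]

lemma Om_zero : Om (fun _ => 0) = 0 := by
  have h : ∀ q, Hs (fun _ : ℝ × ℝ => (0:ℝ)) q = 0 := by
    intro q
    have : fderiv ℝ (fun _ : ℝ × ℝ => (0:ℝ)) = fun _ => 0 := by
      funext y; simp
    unfold Hs
    rw [this]; simp
  simp [Om, DD, h]

lemma OmegaGr_eq {p : ℕ} (R : AddRep p) : OmegaGr R = ∑ s, Om (comp R s) := by
  unfold OmegaGr
  apply sum_pairs
  · intro j; rw [comp_diag, Omega1_eq _ (R.smooth_main j)]
  · intro j k h; rw [comp_lt R j k h, Omega2_eq _ (R.smooth_inter j k)]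
  · intro j k h; rw [comp_gt R j k h, Om_zero]

open Classical in
lemma supp_card {p : ℕ} (R : AddRep p) :
    (Finset.univ.filter fun s => comp R s ≠ fun _ => 0).card ≤ R.Gcount := by
  unfold AddRep.Gcount
  rw [Nat.card_eq_fintype_card, Nat.card_eq_fintype_card, Fintype.card_subtype, Fintype.card_subtype]
  have : (Finset.univ.filter fun s => comp R s ≠ fun _ => 0) ⊆
      ((Finset.univ.filter fun j => R.main j ≠ 0).image fun j => (j, j)) ∪
      Finset.univ.filter fun q : Fin p × Fin p => q.1 < q.2 ∧ R.inter q.1 q.2 ≠ 0 := by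
    rintro ⟨j, k⟩ hs
    have hs := (Finset.mem_filter.1 hs).2
    rw [Finset.mem_union]
    rcases lt_trichotomy j k with h | h | h
    · right
      refine Finset.mem_filter.2 ⟨Finset.mem_univ _, h, fun h0 => hs ?_⟩
      rw [comp_lt R j k h]
      simp only at h0
      rw [h0]; rfl
    · left
      subst h
      refine Finset.mem_image.2 ⟨j, Finset.mem_filter.2 ⟨Finset.mem_univ _, fun h0 => hs ?_⟩, rfl⟩
      rw [comp_diag, h0]; rfl
    · exact absurd (comp_gt R j k h) hs
  refine (Finset.card_le_card this).trans ((Finset.card_union_le _ _).trans ?_)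
  exact Nat.add_le_add_right Finset.card_image_le _

lemma amgm {x A B θ : ℝ} (hA : 0 ≤ A) (hB : 0 ≤ B) (hθ : 0 < θ) (h : x ^ 2 ≤ A * B) :
    2 * x ≤ θ⁻¹ * A + θ * B := by
  have h1 : 0 ≤ θ⁻¹ * A + θ * B := by positivity
  refine le_of_abs_le (abs_le_of_sq_le_sq ?_ h1)
  have : (θ⁻¹ * A) * (θ * B) = A * B := by field_simp
  nlinarith [sq_nonneg (θ⁻¹ * A - θ * B)]

lemma finrank_iSup_le' {n q D : ℕ} (V : Fin q → Submodule ℝ (Fin n → ℝ))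
    (h : ∀ k, Module.finrank ℝ (V k) ≤ D) :
    Module.finrank ℝ (⨆ k, V k : Submodule ℝ (Fin n → ℝ)) ≤ q * D := by
  classical
  have : ∀ s : Finset (Fin q), Module.finrank ℝ (s.sup V : Submodule ℝ (Fin n → ℝ)) ≤ s.card * D := by
    intro s
    induction s using Finset.induction_on with
    | empty => simp
    | insert a s ha ih =>
      rw [Finset.sup_insert, Finset.card_insert_of_notMem ha]
      refine (Submodule.finrank_add_le_finrank_add_finrank _ _).trans ?_
      have := h a
      nlinarith
  have h2 := this Finset.univ
  rwa [Finset.sup_univ_eq_iSup, Finset.card_univ, Fintype.card_fin] at h2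

lemma det_bound {n q : ℕ} {I : Type*} [Fintype I] [DecidableEq I]
    (z : I → Fin n → ℝ × ℝ) (V : I → Submodule ℝ (Fin n → ℝ)) (M : I → Matrix (Fin n) (Fin n) ℝ)
    (MM : (Fin q → I) → Matrix (Fin n) (Fin n) ℝ)
    (hM : ∀ s, (M s).PosSemidef) (hMM : ∀ τ, (MM τ).PosSemidef) (ν : ℝ) (hν : 0 ≤ ν)
    (hV : ∀ s, ∀ g : ℝ × ℝ → ℝ, ContDiff ℝ 2 g → ∃ r : Fin n → ℝ, (fun i => g (z s i) - r i) ∈ V s ∧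
        ∑ i, r i ^ 2 ≤ ν * Om g ∧
        ∀ a : Fin n → ℝ, (∑ i, a i * r i) ^ 2 ≤ ν * (a ⬝ᵥ M s *ᵥ a) * Om g)
    (hMMV : ∀ τ, ∀ (a : Fin n → ℝ), ∀ v ∈ (⨆ k, V (τ k) : Submodule ℝ (Fin n → ℝ)),
      (∑ i, a i * v i) ^ 2 ≤ (a ⬝ᵥ MM τ *ᵥ a) * ∑ i, v i ^ 2)
    (ε : Fin n → ℝ) (U : ℝ) (hU0 : 0 ≤ U) (hU1 : ∀ s, ε ⬝ᵥ M s *ᵥ ε ≤ U)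
    (hU2 : ∀ τ, ε ⬝ᵥ MM τ *ᵥ ε ≤ U)
    (g : I → ℝ × ℝ → ℝ) (hg : ∀ s, ContDiff ℝ 2 (g s)) (S : Finset I) (hS : S.card ≤ q)
    (hS0 : ∀ s, s ∉ S → g s = fun _ => 0) (hq : 1 ≤ q) (hI : Nonempty I) (θ : ℝ) (hθ : 0 < θ) :
    2 * ∑ i, ε i * ∑ s, g s (z s i) ≤ θ⁻¹ * ((q + 1) * U) + 2 * θ * ∑ i, (∑ s, g s (z s i)) ^ 2
      + θ * ν * (2 * q + 1) * ∑ s, Om (g s) := by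
  obtain ⟨s0⟩ := hI
  choose r hr1 hr2 hr3 using fun s => hV s (g s) (hg s)
  obtain ⟨τ, hτ⟩ : ∃ τ : Fin q → I, ∀ s ∈ S, ∃ k, τ k = s := by
    let e := S.equivFin
    refine ⟨fun k => if h : (k : ℕ) < S.card then (e.symm ⟨k, h⟩ : I) else s0, fun s hs => ?_⟩
    have h2 := (e ⟨s, hs⟩).2
    refine ⟨⟨(e ⟨s, hs⟩ : ℕ), h2.trans_le hS⟩, ?_⟩
    simp
  have hOm : ∑ s ∈ S, Om (g s) ≤ ∑ s, Om (g s) :=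
    Finset.sum_le_sum_of_subset_of_nonneg (Finset.subset_univ _) fun s _ _ => Om_nonneg _
  have hsum : ∀ i, ∑ s, g s (z s i) = ∑ s ∈ S, g s (z s i) := by
    intro i
    refine (Finset.sum_subset (Finset.subset_univ _) fun s _ hs => ?_).symm
    rw [hS0 s hs]
  simp only [hsum]
  set v : Fin n → ℝ := ∑ s ∈ S, fun i => g s (z s i) - r s i with hv
  have hvV : v ∈ (⨆ k, V (τ k) : Submodule ℝ (Fin n → ℝ)) := by
    refine Submodule.sum_mem _ fun s hs => ?_
    obtain ⟨k, hk⟩ := hτ s hs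
    have := hr1 s
    rw [← hk] at this
    exact Submodule.mem_iSup_of_mem k (by rw [← hk]; exact this)
  have hvi : ∀ i, v i = ∑ s ∈ S, g s (z s i) - ∑ s ∈ S, r s i := by
    intro i
    rw [hv, Finset.sum_apply, Finset.sum_sub_distrib]
  have hdec : ∑ i, ε i * ∑ s ∈ S, g s (z s i) = ∑ i, ε i * v i + ∑ s ∈ S, ∑ i, ε i * r s i := by
    rw [Finset.sum_comm, ← Finset.sum_add_distrib]
    refine Finset.sum_congr rfl fun i _ => ?_
    rw [hvi, ← Finset.mul_sum]; ring
  have hps : ∀ {N : Matrix (Fin n) (Fin n) ℝ}, N.PosSemidef → 0 ≤ ε ⬝ᵥ N *ᵥ ε := by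
    intro N hN
    simpa using hN.dotProduct_mulVec_nonneg ε
  have hv2 : ∑ i, v i ^ 2 ≤ 2 * ∑ i, (∑ s ∈ S, g s (z s i)) ^ 2 + 2 * q * (ν * ∑ s ∈ S, Om (g s)) := by
    have e1 : ∀ i, v i ^ 2 ≤ 2 * (∑ s ∈ S, g s (z s i)) ^ 2 + 2 * q * ∑ s ∈ S, r s i ^ 2 := by
      intro i
      rw [hvi]
      have h1 : (∑ s ∈ S, r s i) ^ 2 ≤ S.card * ∑ s ∈ S, r s i ^ 2 := sq_sum_le_card_mul_sum_sq
      have h2 : (S.card : ℝ) * ∑ s ∈ S, r s i ^ 2 ≤ q * ∑ s ∈ S, r s i ^ 2 :=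
        mul_le_mul_of_nonneg_right (by exact_mod_cast hS) (Finset.sum_nonneg fun _ _ => sq_nonneg _)
      nlinarith [sq_nonneg (∑ s ∈ S, g s (z s i) + ∑ s ∈ S, r s i)]
    refine (Finset.sum_le_sum fun i _ => e1 i).trans ?_
    rw [Finset.sum_add_distrib, ← Finset.mul_sum, ← Finset.mul_sum, Finset.sum_comm]
    have e2 : ∑ s ∈ S, ∑ i, r s i ^ 2 ≤ ν * ∑ s ∈ S, Om (g s) := by
      rw [Finset.mul_sum]; exact Finset.sum_le_sum fun s _ => hr2 s
    gcongr
  have b1 := amgm (hps (hMM τ)) (Finset.sum_nonneg fun i _ => sq_nonneg (v i)) hθ (hMMV τ ε v hvV)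
  have b2 : ∀ s ∈ S, 2 * ∑ i, ε i * r s i ≤ θ⁻¹ * U + θ * (ν * Om (g s)) := by
    intro s _
    have := amgm (x := ∑ i, ε i * r s i) (hps (hM s)) (mul_nonneg hν (Om_nonneg (g s))) hθ
      ((hr3 s ε).trans (le_of_eq (by ring)))
    refine this.trans ?_
    gcongr
    exact hU1 s
  have b3 : 2 * ∑ s ∈ S, ∑ i, ε i * r s i ≤ q * (θ⁻¹ * U) + θ * ν * ∑ s ∈ S, Om (g s) := by
    rw [Finset.mul_sum]
    refine (Finset.sum_le_sum b2).trans ?_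
    rw [Finset.sum_add_distrib, Finset.sum_const, nsmul_eq_mul, ← Finset.mul_sum, ← Finset.mul_sum,
      mul_assoc θ]
    gcongr
  have b4 : θ⁻¹ * (ε ⬝ᵥ MM τ *ᵥ ε) ≤ θ⁻¹ * U := by
    gcongr
    exact hU2 τ
  have b5 := mul_le_mul_of_nonneg_left hv2 hθ.le
  have b6 : θ * ν * (2 * q + 1) * ∑ s ∈ S, Om (g s) ≤ θ * ν * (2 * q + 1) * ∑ s, Om (g s) := by
    gcongr
  rw [hdec]
  linarith

end Census

namespace Census
open Matrix

lemma union_tail {n : ℕ} {J : Type*} [Fintype J] (N : J → Matrix (Fin n) (Fin n) ℝ)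
    (hN : ∀ j, (N j).PosSemidef) (hop : ∀ j a, a ⬝ᵥ N j *ᵥ a ≤ a ⬝ᵥ a) (D : ℝ)
    (htr : ∀ j, (N j).trace ≤ D) (σ u : ℝ) (hσ : 0 < σ) (δ : ℝ)
    (hδ : (Fintype.card J : ℝ) * Real.exp (D / 2 - u / 4) ≤ δ) (T : Set (Fin n → ℝ))
    (hT : ∀ ε : Fin n → ℝ, (∀ j, ε ⬝ᵥ N j *ᵥ ε ≤ σ ^ 2 * u) → ε ∈ T) :
    ENNReal.ofReal (1 - δ) ≤ gaussMeasure n σ T := by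
  have hprob : IsProbabilityMeasure (gaussMeasure n σ) := by
    have : ∀ v : NNReal, IsProbabilityMeasure (Measure.pi fun _ : Fin n => gaussianReal 0 v) :=
      fun v => inferInstance
    exact this _
  let bad : J → Set (Fin n → ℝ) := fun j => {ε | σ ^ 2 * u < ε ⬝ᵥ N j *ᵥ ε}
  have hδ0 : 0 ≤ δ := le_trans (by positivity) hδ
  have hcov : (Set.univ : Set (Fin n → ℝ)) ⊆ T ∪ ⋃ j, bad j := by
    intro ε _
    by_cases h : ∀ j, ε ⬝ᵥ N j *ᵥ ε ≤ σ ^ 2 * u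
    · exact Or.inl (hT ε h)
    · push Not at h
      obtain ⟨j, hj⟩ := h
      exact Or.inr (Set.mem_iUnion.2 ⟨j, hj⟩)
  have hbad : gaussMeasure n σ (⋃ j, bad j) ≤ ENNReal.ofReal δ := by
    refine (measure_iUnion_fintype_le _ _).trans ?_
    refine (Finset.sum_le_sum fun j _ =>
      quad_tail n (N j) (hN j) (hop j) D (htr j) σ u hσ).trans ?_
    rw [Finset.sum_const, nsmul_eq_mul, Finset.card_univ]
    rw [← ENNReal.ofReal_natCast, ← ENNReal.ofReal_mul (by positivity)]
    exact ENNReal.ofReal_le_ofReal hδ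
  have h1 : (1 : ENNReal) ≤ gaussMeasure n σ T + ENNReal.ofReal δ := by
    calc (1 : ENNReal) = gaussMeasure n σ Set.univ := measure_univ.symm
      _ ≤ gaussMeasure n σ (T ∪ ⋃ j, bad j) := measure_mono hcov
      _ ≤ _ := (measure_union_le _ _).trans (by gcongr)
  rw [ENNReal.ofReal_sub _ hδ0, ENNReal.ofReal_one]
  exact tsub_le_iff_right.2 h1

lemma choose_m {n : ℕ} (hn : 1 ≤ n) : ∃ m : ℕ, (1:ℝ) / 16 ^ m ≤ rn n ^ 2 ∧
    (4:ℝ) ^ m ≤ 4 * (n * (n:ℝ) ^ (-(2/3) : ℝ)) ∧ rn n ^ 2 = (n:ℝ) ^ (-(2/3) : ℝ) := by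
  have hn0 : (0:ℝ) < n := by exact_mod_cast hn
  have hn1 : (1:ℝ) ≤ n := by exact_mod_cast hn
  have hx : (1:ℝ) ≤ (n:ℝ) ^ ((1/3) : ℝ) := Real.one_le_rpow hn1 (by norm_num)
  obtain ⟨k, hk1, hk2⟩ := exists_nat_pow_near hx (by norm_num : (1:ℝ) < 4)
  have e1 : (n:ℝ) * (n:ℝ) ^ (-(2/3) : ℝ) = (n:ℝ) ^ ((1/3) : ℝ) := by
    nth_rewrite 1 [← Real.rpow_one (n:ℝ)]
    rw [← Real.rpow_add hn0]; norm_num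
  have e2 : rn n = ((n:ℝ) ^ ((1/3) : ℝ))⁻¹ := by
    unfold rn; rw [Real.rpow_neg hn0.le]
  refine ⟨k + 1, ?_, ?_, ?_⟩
  · rw [e2, one_div, inv_pow]
    apply inv_anti₀ (by positivity)
    have : (16:ℝ) ^ (k + 1) = (4 ^ (k + 1)) ^ 2 := by
      rw [← pow_mul, mul_comm, pow_mul]; norm_num
    rw [this]
    gcongr
  · rw [e1, pow_succ]; linarith
  · unfold rn
    rw [← Real.rpow_natCast, ← Real.rpow_mul hn0.le]; norm_num

end Census

namespace Census
open Matrix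

lemma basic_ineq {n p : ℕ} (hn : 1 ≤ n) (K : ℕ) (x : Fin n → Fin p → ℝ) (R0 R : AddRep p)
    (hR0 : R0.Gcount ≤ K) (ε : Fin n → ℝ) (lam mu : ℝ) (hmu : 0 ≤ mu)
    (h : IsMinimizer K x (fun i => evalVec x R0 i + ε i) lam mu R) :
    ∑ i, (evalVec x R i - evalVec x R0 i) ^ 2 + n * lam * OmegaGr R ≤
      2 * ∑ i, ε i * (evalVec x R i - evalVec x R0 i) + n * lam * OmegaGr R0 + n * mu * K := by
  have hn0 : (0:ℝ) < n := by exact_mod_cast hn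
  have h1 := h.2 R0 hR0
  unfold objective normSqN at h1
  have h2 := mul_le_mul_of_nonneg_left h1 hn0.le
  have e : ∑ i, (evalVec x R0 i + ε i - evalVec x R i) ^ 2 =
      ∑ i, (evalVec x R i - evalVec x R0 i) ^ 2
        - 2 * ∑ i, ε i * (evalVec x R i - evalVec x R0 i) + ∑ i, ε i ^ 2 := by
    rw [Finset.mul_sum, ← Finset.sum_sub_distrib, ← Finset.sum_add_distrib]
    refine Finset.sum_congr rfl fun i _ => by ring
  have e' : ∑ i, (evalVec x R0 i + ε i - evalVec x R0 i) ^ 2 = ∑ i, ε i ^ 2 := by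
    refine Finset.sum_congr rfl fun i _ => by ring
  rw [e, e'] at h2
  have e3 : ∀ X Y Z : ℝ, (n:ℝ) * (1 / n * X + Y + Z) = X + n * Y + n * Z := by
    intro X Y Z; field_simp
  rw [e3, e3] at h2
  have hG : (n:ℝ) * (mu * R0.Gcount) ≤ n * mu * K := by
    rw [mul_assoc]
    have : (R0.Gcount : ℝ) ≤ K := by exact_mod_cast hR0
    gcongr
  have hG' : 0 ≤ (n:ℝ) * (mu * R.Gcount) := by positivity
  linarith

lemma logep_eq {p : ℕ} (hp : 1 ≤ p) : logep p = 1 + Real.log p := by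
  have : (0:ℝ) < p := by exact_mod_cast hp
  unfold logep
  rw [Real.log_mul (Real.exp_pos 1).ne' this.ne', Real.log_exp]

/-- The explicit constant. -/
def Cst (K : ℕ) (s w : ℝ) : ℝ :=
  2 * (|s| * (12 * (4 * K + 1) + 4 * |s|) * (2 * K + 1) * (408 * K) + 4 * |s| * |w|
    + K * (s ^ 2 + 2 * |s| * |w|)) + 1

lemma Cst_pos (K : ℕ) (s w : ℝ) : 0 < Cst K s w := by unfold Cst; positivity

lemma card_bound {p K : ℕ} (hp : 1 ≤ p) (hK : 1 ≤ K) (D : ℝ) :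
    (Fintype.card ((Fin p × Fin p) ⊕ (Fin (2 * K) → Fin p × Fin p)) : ℝ) *
      Real.exp (D / 2 - (2 * D + 4 * (4 * K + 1) * Real.log p + 4 * Real.log 2) / 4) ≤ 1 / p := by
  have hp0 : (0:ℝ) < p := by exact_mod_cast hp
  have hp1 : (1:ℝ) ≤ p := by exact_mod_cast hp
  have e1 : Real.exp (D / 2 - (2 * D + 4 * (4 * K + 1) * Real.log p + 4 * Real.log 2) / 4) =
      1 / (2 * (p:ℝ) ^ (4 * K + 1)) := by
    have : D / 2 - (2 * D + 4 * (4 * K + 1) * Real.log p + 4 * Real.log 2) / 4 =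
        -(Real.log (2 * (p:ℝ) ^ (4 * K + 1))) := by
      rw [Real.log_mul (by norm_num) (by positivity), Real.log_pow]; push_cast; ring
    rw [this, Real.exp_neg, Real.exp_log (by positivity), one_div]
  have e2 : (Fintype.card ((Fin p × Fin p) ⊕ (Fin (2 * K) → Fin p × Fin p)) : ℝ) ≤
      2 * (p:ℝ) ^ (4 * K) := by
    simp only [Fintype.card_sum, Fintype.card_prod, Fintype.card_fin, Fintype.card_fun]
    push_cast
    have a1 : ((p:ℝ) * p) ^ (2 * K) = (p:ℝ) ^ (4 * K) := by
      rw [← sq, ← pow_mul]; congr 1; ring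
    have a2 : (p:ℝ) * p ≤ (p:ℝ) ^ (4 * K) := by
      rw [← sq]; exact pow_le_pow_right₀ hp1 (by omega)
    rw [a1]; linarith
  rw [e1, mul_one_div, div_le_div_iff₀ (by positivity) hp0, pow_succ]
  nlinarith

set_option maxHeartbeats 1600000 in
lemma main_bound {n p K : ℕ} (hK : 1 ≤ K) (hn : 1 ≤ n) (hp : 1 ≤ p)
    (x : Fin n → Fin p → ℝ) (hx : ∀ i j, x i j ∈ Set.Icc (0:ℝ) 1) (σ : ℝ) (hσ : 0 < σ)
    (R0 : AddRep p) (hR0 : R0.Gcount ≤ K) (lam mu : ℝ)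
    (hlam : lam = 1 * σ * (rn n ^ 2 + rn n * Real.sqrt (logep p / n)))
    (hmu : mu = 1 * σ ^ 2 * (rn n ^ 2 + logep p / n) + 1 * lam * OmegaGr R0)
    (fhat : (Fin n → ℝ) → AddRep p)
    (hmin : ∀ ε : Fin n → ℝ, IsMinimizer K x (fun i => evalVec x R0 i + ε i) lam mu (fhat ε)) :
    ENNReal.ofReal (1 - 1 / (p : ℝ)) ≤
      gaussMeasure n σ
        {ε : Fin n → ℝ |
          normSqN (fun i => evalVec x (fhat ε) i - evalVec x R0 i) ≤
            Cst K σ (OmegaGr R0) * ((n : ℝ) ^ (-(2/3) : ℝ) + logep p / n)} := by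
  classical
  have hn0 : (0:ℝ) < n := by exact_mod_cast hn
  have hp1 : (1:ℝ) ≤ p := by exact_mod_cast hp
  have hK1 : (1:ℝ) ≤ K := by exact_mod_cast hK
  obtain ⟨m, hm1, hm2, hrn⟩ := choose_m hn
  let I := Fin p × Fin p
  let z : I → Fin n → ℝ × ℝ := fun s i => (x i s.1, x i s.2)
  choose V M hV1 hM1 hM2 hM3 hV2 using fun s : I =>
    pair_core hn (z s) (fun i => ⟨hx i s.1, hx i s.2⟩) m
  choose MM hP1 hP2 hP3 hP4 using fun τ : Fin (2 * K) → I =>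
    proj_exists (⨆ k, V (τ k)) _ (finrank_iSup_le' (fun k => V (τ k)) (fun k => hV1 (τ k)))
  set D : ℝ := 48 * K * 4 ^ m with hD
  set u : ℝ := 2 * D + 4 * (4 * K + 1) * Real.log p + 4 * Real.log 2 with hu
  have hlogp : 0 ≤ Real.log p := Real.log_nonneg hp1
  have hlog2 : 0 ≤ Real.log 2 := Real.log_nonneg (by norm_num)
  have hlog2' : Real.log 2 ≤ 1 := by linarith [Real.log_two_lt_d9]
  have h4m : (0:ℝ) < 4 ^ m := by positivity
  have hu0 : 0 ≤ u := by positivity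
  refine union_tail (J := I ⊕ (Fin (2 * K) → I)) (Sum.elim M MM) ?_ ?_ D ?_ σ u hσ (1 / p)
    (card_bound hp hK D) _ ?_
  · rintro (s | τ)
    · exact hM1 s
    · exact hP1 τ
  · rintro (s | τ)
    · exact hM3 s
    · exact hP3 τ
  · rintro (s | τ)
    · refine (hM2 s).trans ?_
      rw [hD]; nlinarith
    · refine (hP2 τ).trans (le_of_eq ?_)
      rw [hD]; push_cast; ring
  intro ε hε
  rw [Set.mem_ofPred_eq]
  set R := fhat ε with hR
  have hlep : logep p = 1 + Real.log p := logep_eq hp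
  set l : ℝ := logep p / n with hl
  have hl0 : 0 ≤ l := div_nonneg (by linarith) hn0.le
  set ρ : ℝ := rn n ^ 2 with hρ
  have hr0 : 0 ≤ rn n := by unfold rn; positivity
  have hρ0 : 0 ≤ ρ := sq_nonneg _
  rw [← hrn]
  -- penalty facts
  have hΩ0 : 0 ≤ OmegaGr R0 := by
    rw [OmegaGr_eq]; exact Finset.sum_nonneg fun s _ => Om_nonneg _
  have hΩ : 0 ≤ OmegaGr R := by
    rw [OmegaGr_eq]; exact Finset.sum_nonneg fun s _ => Om_nonneg _
  have hlam1 : σ * ρ ≤ lam := by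
    rw [hlam]
    have : 0 ≤ rn n * Real.sqrt l := mul_nonneg hr0 (Real.sqrt_nonneg _)
    nlinarith
  have hlam2 : lam ≤ 2 * σ * (ρ + l) := by
    rw [hlam]
    have h1 : Real.sqrt l ^ 2 = l := Real.sq_sqrt hl0
    have h2 : 2 * (rn n * Real.sqrt l) ≤ ρ + l := by
      nlinarith [sq_nonneg (rn n - Real.sqrt l)]
    nlinarith
  have hlam0 : 0 ≤ lam := le_trans (by positivity) hlam1
  have hmu0 : 0 ≤ mu := by rw [hmu]; positivity
  -- difference
  let g : I → ℝ × ℝ → ℝ := fun s q => comp R s q - comp R0 s q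
  have hΔ : ∀ i, evalVec x R i - evalVec x R0 i = ∑ s, g s (z s i) := by
    intro i
    unfold evalVec
    rw [toFun_eq, toFun_eq, ← Finset.sum_sub_distrib]
  have hOm : ∑ s, Om (g s) ≤ 2 * OmegaGr R + 2 * OmegaGr R0 := by
    rw [OmegaGr_eq, OmegaGr_eq, Finset.mul_sum, Finset.mul_sum, ← Finset.sum_add_distrib]
    exact Finset.sum_le_sum fun s _ => Om_sub_le (comp_smooth R s) (comp_smooth R0 s)
  let S : Finset I := (Finset.univ.filter fun s => comp R s ≠ fun _ => 0) ∪
    (Finset.univ.filter fun s => comp R0 s ≠ fun _ => 0)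
  have hSc : S.card ≤ 2 * K := by
    refine (Finset.card_union_le _ _).trans ?_
    have h1 := (supp_card R).trans (hmin ε).1
    have h2 := (supp_card R0).trans hR0
    convert (Nat.add_le_add h1 h2).trans (by omega : K + K ≤ 2 * K)
  have hS0 : ∀ s, s ∉ S → g s = fun _ => 0 := by
    intro s hs
    simp only [S, Finset.mem_union, Finset.mem_filter, Finset.mem_univ, true_and, not_or,
      not_not] at hs
    funext q
    simp only [g, hs.1, hs.2, sub_zero]
  set θ : ℝ := σ / (12 * (4 * K + 1) + 4 * σ) with hθ
  have hden : 0 < 12 * (4 * (K:ℝ) + 1) + 4 * σ := by positivity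
  have hθ0 : 0 < θ := by positivity
  have hθ1 : θ ≤ 1 / 4 := by
    rw [hθ, div_le_div_iff₀ hden (by norm_num)]; nlinarith
  have hθ2 : 12 * (4 * K + 1) * θ ≤ σ := by
    rw [hθ, mul_div_assoc', div_le_iff₀ hden]; nlinarith
  have hθ3 : θ⁻¹ * σ ^ 2 = σ * (12 * (4 * K + 1) + 4 * σ) := by
    rw [hθ, inv_div]; field_simp
  have hdet := det_bound z V M MM hM1 hP1 (6 * n / 16 ^ m) (by positivity) hV2 hP4 ε (σ ^ 2 * u)
    (by positivity) (fun s => hε (Sum.inl s)) (fun τ => hε (Sum.inr τ)) g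
    (fun s => (comp_smooth R s).sub (comp_smooth R0 s)) S hSc hS0 (by omega)
    ⟨(⟨0, hp⟩, ⟨0, hp⟩)⟩ θ hθ0
  have hbas := basic_ineq hn K x R0 R hR0 ε lam mu hmu0 (hmin ε)
  simp only [← hΔ] at hdet
  set Δ2 : ℝ := ∑ i, (evalVec x R i - evalVec x R0 i) ^ 2 with hΔ2
  have hΔ20 : 0 ≤ Δ2 := Finset.sum_nonneg fun _ _ => sq_nonneg _
  have hpen : θ * (6 * n / 16 ^ m) * (2 * (2 * K : ℕ) + 1) * ∑ s, Om (g s) ≤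
      n * lam * (OmegaGr R + OmegaGr R0) := by
    have h1 : 0 ≤ ∑ s, Om (g s) := Finset.sum_nonneg fun s _ => Om_nonneg _
    calc θ * (6 * n / 16 ^ m) * (2 * (2 * K : ℕ) + 1) * ∑ s, Om (g s)
        = (6 * (4 * K + 1) * θ) * n * (1 / 16 ^ m) * ∑ s, Om (g s) := by push_cast; ring
      _ ≤ (6 * (4 * K + 1) * θ) * n * ρ * (2 * OmegaGr R + 2 * OmegaGr R0) := by gcongr
      _ = (12 * (4 * K + 1) * θ) * (n * ρ * (OmegaGr R + OmegaGr R0)) := by ring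
      _ ≤ σ * (n * ρ * (OmegaGr R + OmegaGr R0)) := by gcongr
      _ = n * (σ * ρ) * (OmegaGr R + OmegaGr R0) := by ring
      _ ≤ n * lam * (OmegaGr R + OmegaGr R0) := by gcongr
  have hub : u ≤ 408 * K * (n * (ρ + l)) := by
    have h1 : n * l = 1 + Real.log p := by rw [hl, hlep]; field_simp
    rw [mul_add, h1, hu, hD]
    rw [← hrn] at hm2
    nlinarith [mul_le_mul_of_nonneg_left hm2 (by positivity : (0:ℝ) ≤ K),
      mul_nonneg (sub_nonneg.2 hK1) hlogp, mul_nonneg hn0.le hρ0,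
      mul_nonneg (by positivity : (0:ℝ) ≤ K) (mul_nonneg hn0.le hρ0)]
  have hnoise : θ⁻¹ * (((2 * K : ℕ) + 1) * (σ ^ 2 * u)) ≤
      σ * (12 * (4 * K + 1) + 4 * σ) * (2 * K + 1) * (408 * K) * (n * (ρ + l)) := by
    calc θ⁻¹ * (((2 * K : ℕ) + 1) * (σ ^ 2 * u)) = (θ⁻¹ * σ ^ 2) * (2 * K + 1) * u := by
          push_cast; ring
      _ ≤ (θ⁻¹ * σ ^ 2) * (2 * K + 1) * (408 * K * (n * (ρ + l))) := by gcongr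
      _ = _ := by rw [hθ3]; ring
  have hlΩ : lam * OmegaGr R0 ≤ 2 * σ * (ρ + l) * OmegaGr R0 := by gcongr
  have hmub : mu * K ≤ (σ ^ 2 * (ρ + l) + 2 * σ * (ρ + l) * OmegaGr R0) * K := by
    refine mul_le_mul_of_nonneg_right ?_ (by positivity)
    rw [hmu]; linarith
  have hθΔ : 2 * θ * Δ2 ≤ 1 / 2 * Δ2 := by gcongr; linarith
  have hfin : Δ2 ≤ n * (2 * (σ * (12 * (4 * K + 1) + 4 * σ) * (2 * K + 1) * (408 * K)
      + 4 * σ * OmegaGr R0 + K * (σ ^ 2 + 2 * σ * OmegaGr R0)) * (ρ + l)) := by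
    have a1 := mul_le_mul_of_nonneg_left hlΩ hn0.le
    have a2 := mul_le_mul_of_nonneg_left hmub hn0.le
    nlinarith
  unfold normSqN Cst
  rw [abs_of_pos hσ, abs_of_nonneg hΩ0, one_div, inv_mul_le_iff₀ hn0]
  refine hfin.trans ?_
  gcongr
  linarith

end Census

open Census in
/-- Under the correctly specified model and the specific tuning choices
`λₙ = c₁σ[rₙ² + rₙ√(log(ep)/n)]`, `μₙ = c₂σ²[rₙ² + log(ep)/n] + c₂λₙΩ_gr(f°)`
(with `c₁, c₂` the constants of the corollary, depending only on `K`), there is a constant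
`C` depending only on `σ`, `Ω_gr(f°)` and `K` such that with probability at least `1-1/p`,
`‖f̂ - f*‖ₙ² ≤ C [n^{-2/3} + log(ep)/n]`. -/
theorem statement3 (K : ℕ) (hK : 1 ≤ K) :
    ∃ c₁ c₂ : ℝ, 0 < c₁ ∧ 0 < c₂ ∧
      ∃ C : ℝ → ℝ → ℝ, (∀ s w, 0 < C s w) ∧
      ∀ (n p : ℕ), 1 ≤ n → 1 ≤ p →
      ∀ (x : Fin n → Fin p → ℝ), (∀ i j, x i j ∈ Set.Icc (0:ℝ) 1) →
      ∀ (σ : ℝ), 0 < σ →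
      ∀ (R0 : AddRep p), R0.Gcount ≤ K →
      ∀ (lam mu : ℝ),
        lam = c₁ * σ * (rn n ^ 2 + rn n * Real.sqrt (logep p / n)) →
        mu = c₂ * σ ^ 2 * (rn n ^ 2 + logep p / n) + c₂ * lam * OmegaGr R0 →
      ∀ (fhat : (Fin n → ℝ) → AddRep p),
        (∀ ε : Fin n → ℝ,
          IsMinimizer K x (fun i => evalVec x R0 i + ε i) lam mu (fhat ε)) →
        ENNReal.ofReal (1 - 1 / (p : ℝ)) ≤
          gaussMeasure n σ
            {ε : Fin n → ℝ |
              normSqN (fun i => evalVec x (fhat ε) i - evalVec x R0 i) ≤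
                C σ (OmegaGr R0) * ((n : ℝ) ^ (-(2/3) : ℝ) + logep p / n)} := by
  exact ⟨1, 1, one_pos, one_pos, Cst K, Cst_pos K,
    fun n p hn hp x hx σ hσ R0 hR0 lam mu hlam hmu fhat hmin =>
      main_bound hK hn hp x hx σ hσ R0 hR0 lam mu hlam hmu fhat hmin⟩
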